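/- Let n ≥ 1, let b ≥ 1 be an integer, and let α ∈ (1/2, 1] satisfy 2α − 1 < n and nb > (2α−1)(b+1). Let p(·) ∈ P^log(ℝ^n) with p⁻ > b+1 and (2α−1)·p⁺ < n(b+1). Then there exists C > 0 such that for every measurable u : (0,∞)×ℝ^n → ℝ: N_{p(·), nb/(2α−1)}( (t,x) ↦ Σ_{j=1}^n ∫_0^t (∂_j 𝔤_{t−s}^α ∗ (|u|^b u)(s,·))(x) ds ) ≤ C · ( N_{p(·), nb/(2α−1)}(u) )^{b+1}. -/

import Mathlib

open MeasureTheory Set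
open scoped ENNReal FourierTransform

noncomputable section

/-- Euclidean space `ℝ^n`. -/
abbrev Rn (n : ℕ) := EuclideanSpace ℝ (Fin n)

/-- Luxemburg norm of an `ℝ≥0∞`-valued function for a variable exponent `p`. -/
def luxNorm {Ω : Type*} [MeasurableSpace Ω] (μ : Measure Ω) (p : Ω → ℝ) (f : Ω → ℝ≥0∞) : ℝ≥0∞ :=
  sInf {lam : ℝ≥0∞ | 0 < lam ∧ ∫⁻ x, (f x / lam) ^ (p x) ∂μ ≤ 1}

/-- Luxemburg norm `‖f‖_{L^{p(·)}}` of a real-valued function. -/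
def luxNormR {Ω : Type*} [MeasurableSpace Ω] (μ : Measure Ω) (p : Ω → ℝ) (f : Ω → ℝ) : ℝ≥0∞ :=
  luxNorm μ p (fun x => ENNReal.ofReal |f x|)

/-- `p(·) ∈ P^log(Ω)`: measurable, with values in `[1,∞)` on `Ω`, locally log-Hölder
continuous on `Ω`, and satisfying the log-Hölder decay condition on `Ω`. -/
def IsPLog {E : Type*} [NormedAddCommGroup E] [MeasurableSpace E] (Ω : Set E) (p : E → ℝ) : Prop :=
  Measurable p ∧ (∀ x ∈ Ω, 1 ≤ p x) ∧
  ∃ C₁ > (0:ℝ), ∃ C₂ > (0:ℝ), ∃ pinf : ℝ,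
    (∀ x ∈ Ω, ∀ y ∈ Ω, x ≠ y →
      |1 / p x - 1 / p y| ≤ C₁ / Real.log (Real.exp 1 + 1 / ‖x - y‖)) ∧
    (∀ x ∈ Ω, |1 / p x - 1 / pinf| ≤ C₂ / Real.log (Real.exp 1 + ‖x‖))

/-- The fractional heat kernel `𝔤_t^α` on `ℝ^n`: the inverse Fourier transform of
`ξ ↦ exp (-t‖ξ‖^{2α})` (it is real-valued; we take the real part). -/
def gKer (n : ℕ) (α t : ℝ) (x : Rn n) : ℝ :=
  (𝓕⁻ (fun ξ : Rn n => (Real.exp (-t * ‖ξ‖ ^ (2 * α)) : ℂ)) x).re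

/-- Convolution on `ℝ^n`. -/
def conv (n : ℕ) (g f : Rn n → ℝ) (x : Rn n) : ℝ := ∫ y, g (x - y) * f y

/-- The partial derivative `∂_j 𝔤_t^α`. -/
def dKer (n : ℕ) (α t : ℝ) (j : Fin n) (z : Rn n) : ℝ :=
  fderiv ℝ (gKer n α t) z (EuclideanSpace.single j 1)

/-- `x ↦ ess sup_{t>0} |u(t,x)|`, as an `ℝ≥0∞`-valued function. -/
def timeSup (n : ℕ) (u : ℝ → Rn n → ℝ) (x : Rn n) : ℝ≥0∞ :=
  essSup (fun t => ENNReal.ofReal |u t x|) (volume.restrict (Ioi (0:ℝ)))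

/-- Mixed norm `‖f‖_{𝓛^{p(·)}_r} = max {‖f‖_{L^{p(·)}}, ‖f‖_{L^r}}`. -/
def mixedNorm (n : ℕ) (p : Rn n → ℝ) (r : ℝ) (f : Rn n → ℝ) : ℝ≥0∞ :=
  max (luxNormR volume p f) (luxNormR volume (fun _ => r) f)

/-- `N_{p(·),r}(u) = ‖x ↦ ess sup_{t>0}|u(t,x)|‖_{𝓛^{p(·)}_r}`. -/
def mixedN (n : ℕ) (p : Rn n → ℝ) (r : ℝ) (u : ℝ → Rn n → ℝ) : ℝ≥0∞ :=
  max (luxNorm volume p (timeSup n u)) (luxNorm volume (fun _ => r) (timeSup n u))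

section

open Filter Topology Polynomial

lemma neg_one_pow_mul_choose_nonpos {α : ℝ} (h0 : 0 < α) (h1 : α ≤ 1) (k : ℕ) :
    (-1) ^ (k + 1) * Ring.choose α (k + 1) ≤ 0 := by
  induction k with
  | zero => simp [h0.le]
  | succ k ih =>
    have h : Ring.choose α (k + 1 + 1) = Ring.choose α (k + 1) * ((α - (k + 1)) / (k + 2)) := by
      rw [Ring.choose_eq_smul, Ring.choose_eq_smul, descPochhammer_succ_right, smeval_mul,
        Nat.factorial_succ (k + 1)]
      simp [Polynomial.smeval_sub, Polynomial.smeval_X, Polynomial.smeval_natCast,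
        Polynomial.smeval_add, Polynomial.smeval_one]
      field_simp
      ring
    rw [h, pow_succ]
    have h2 : 0 ≤ -((α - (k + 1)) / ((k : ℝ) + 2)) := by
      rw [← neg_div]
      have : (0 : ℝ) ≤ k := by positivity
      apply div_nonneg <;> linarith
    nlinarith [mul_nonneg (neg_nonneg.2 ih) h2]

/-- The power series of `1 - (1 - z) ^ α` has nonnegative coefficients for `0 < α ≤ 1`. -/
lemma exists_hasSum_one_sub_rpow {α : ℝ} (h0 : 0 < α) (h1 : α ≤ 1) :
    ∃ c : ℕ → ℝ, (∀ k, 0 ≤ c k) ∧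
      ∀ z : ℝ, 0 < z → z < 1 → HasSum (fun k => c k * z ^ k) (1 - (1 - z) ^ α) := by
  refine ⟨fun k => (if k = 0 then 1 else 0) - (-1) ^ k * Ring.choose α k, fun k => ?_,
    fun z hz0 hz1 => ?_⟩
  · rcases k with _ | k
    · simp
    · simpa using neg_one_pow_mul_choose_nonpos h0 h1 k
  · have hs := (Real.one_add_rpow_hasFPowerSeriesOnBall_zero (a := α)).hasSum (y := -z)
      (by simpa [edist_eq_enorm_sub, ← ofReal_norm, abs_of_pos hz0] using hz1)
    have h2 : HasSum (fun k : ℕ => (if k = 0 then (1 : ℝ) else 0)) 1 := by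
      simpa using hasSum_ite_eq (0 : ℕ) (1 : ℝ)
    convert! h2.sub hs using 1
    · ext k
      rw [binomialSeries_apply]
      rcases k with _ | k
      · simp
      · simp [List.ofFn_const, neg_pow z]
        ring
    · simp [sub_eq_add_neg]

section Subordination

variable {E : Type*} [MeasurableSpace E]

/-- The inequality that subordination transports from exponentials to `exp (-t λ ^ α)`. -/
def LaplaceBound (μ : Measure E) (φ : E → ℂ) (N : E → ℝ) (ψ : ℝ → ℝ) (f : ℝ → ℝ) : Prop :=
  ‖∫ ξ, φ ξ * (f (N ξ) : ℂ) ∂μ‖ ≤ ∫ l in Ioi (0 : ℝ), ψ l * f l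

lemma LaplaceBound.of_tendsto {μ : Measure E} {φ : E → ℂ} {N : E → ℝ} {ψ : ℝ → ℝ}
    (hφ : Integrable φ μ) (hN : Measurable N) (hN0 : ∀ᵐ ξ ∂μ, 0 < N ξ)
    (hψ : IntegrableOn ψ (Ioi 0)) {F : ℕ → ℝ → ℝ} {f : ℝ → ℝ}
    (hF : ∀ k, Measurable (F k)) (hF1 : ∀ᶠ k in atTop, ∀ l > 0, |F k l| ≤ 1)
    (hlim : ∀ l > 0, Tendsto (fun k => F k l) atTop (𝓝 (f l)))
    (hb : ∀ᶠ k in atTop, LaplaceBound μ φ N ψ (F k)) : LaplaceBound μ φ N ψ f := by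
  have t1 : Tendsto (fun k => ∫ ξ, φ ξ * (F k (N ξ) : ℂ) ∂μ) atTop
      (𝓝 (∫ ξ, φ ξ * (f (N ξ) : ℂ) ∂μ)) := by
    apply tendsto_integral_filter_of_dominated_convergence (fun ξ => ‖φ ξ‖)
    · exact .of_forall fun k => hφ.aestronglyMeasurable.mul
        (Complex.measurable_ofReal.comp ((hF k).comp hN)).aestronglyMeasurable
    · filter_upwards [hF1] with k hk
      filter_upwards [hN0] with ξ hξ
      rw [norm_mul, Complex.norm_real]
      exact mul_le_of_le_one_right (norm_nonneg _) (hk _ hξ)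
    · exact hφ.norm
    · filter_upwards [hN0] with ξ hξ
      exact ((Complex.continuous_ofReal.tendsto _).comp (hlim _ hξ)).const_mul _
  have t2 : Tendsto (fun k => ∫ l in Ioi (0 : ℝ), ψ l * F k l) atTop
      (𝓝 (∫ l in Ioi (0 : ℝ), ψ l * f l)) := by
    apply tendsto_integral_filter_of_dominated_convergence (fun l => ‖ψ l‖)
    · exact .of_forall fun k => hψ.aestronglyMeasurable.mul (hF k).aestronglyMeasurable
    · filter_upwards [hF1] with k hk
      filter_upwards [ae_restrict_mem measurableSet_Ioi] with l hl
      rw [norm_mul]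
      exact mul_le_of_le_one_right (norm_nonneg _) (hk _ hl)
    · exact hψ.norm
    · filter_upwards [ae_restrict_mem measurableSet_Ioi] with l hl
      exact (hlim _ hl).const_mul _
  exact le_of_tendsto_of_tendsto t1.norm t2 hb

lemma LaplaceBound.eval_exp {μ : Measure E} {φ : E → ℂ} {N : E → ℝ} {ψ : ℝ → ℝ}
    (hφ : Integrable φ μ) (hN : Measurable N) (hN0 : ∀ᵐ ξ ∂μ, 0 < N ξ)
    (hψ : IntegrableOn ψ (Ioi 0))
    (hexp : ∀ s ≥ 0, LaplaceBound μ φ N ψ (fun l => Real.exp (-s * l)))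
    {δ : ℝ} (hδ : 0 ≤ δ) {Q : ℝ[X]} (hQ : ∀ k, 0 ≤ Q.coeff k) :
    LaplaceBound μ φ N ψ (fun l => Q.eval (Real.exp (-δ * l))) := by
  have hev : ∀ l, Q.eval (Real.exp (-δ * l))
      = ∑ k ∈ Q.support, Q.coeff k * Real.exp (-(k * δ) * l) := by
    intro l
    rw [Polynomial.eval_eq_sum, Polynomial.sum]
    refine Finset.sum_congr rfl fun k _ => ?_
    rw [← Real.exp_nat_mul]
    ring_nf
  unfold LaplaceBound
  simp only [hev, Complex.ofReal_sum, Finset.mul_sum, Complex.ofReal_mul]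
  have hi1 : ∀ k : ℕ, Integrable (fun ξ => φ ξ * (Real.exp (-(k * δ) * N ξ) : ℂ)) μ := by
    intro k
    refine hφ.mul_bdd (c := 1) (by fun_prop) ?_
    filter_upwards [hN0] with ξ hξ
    rw [Complex.norm_real, Real.norm_of_nonneg (Real.exp_nonneg _), Real.exp_le_one_iff]
    have : 0 ≤ k * δ * N ξ := by positivity
    linarith
  have hi2 : ∀ k : ℕ, IntegrableOn (fun l => ψ l * Real.exp (-(k * δ) * l)) (Ioi 0) := by
    intro k
    refine Integrable.mul_bdd (c := 1) hψ (by fun_prop) ?_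
    filter_upwards [ae_restrict_mem measurableSet_Ioi] with l hl
    rw [Real.norm_of_nonneg (Real.exp_nonneg _), Real.exp_le_one_iff]
    have : 0 ≤ k * δ * l := mul_nonneg (by positivity) (le_of_lt hl)
    linarith
  rw [integral_finsetSum, integral_finsetSum]
  · refine (norm_sum_le _ _).trans (Finset.sum_le_sum fun k _ => ?_)
    have e1 : ∫ ξ, φ ξ * ((Q.coeff k : ℂ) * (Real.exp (-(k * δ) * N ξ) : ℂ)) ∂μ
        = (Q.coeff k : ℂ) * ∫ ξ, φ ξ * (Real.exp (-(k * δ) * N ξ) : ℂ) ∂μ := by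
      rw [← integral_const_mul]
      congr 1; ext ξ; ring
    have e2 : ∫ l in Ioi (0 : ℝ), ψ l * (Q.coeff k * Real.exp (-(k * δ) * l))
        = Q.coeff k * ∫ l in Ioi (0 : ℝ), ψ l * Real.exp (-(k * δ) * l) := by
      rw [← integral_const_mul]
      congr 1; ext ξ; ring
    rw [e1, e2, norm_mul, Complex.norm_real, Real.norm_of_nonneg (hQ k)]
    exact mul_le_mul_of_nonneg_left (hexp (k * δ) (by positivity)) (hQ k)
  · intro k _
    refine ((hi2 k).const_mul (Q.coeff k)).congr (.of_forall fun l => ?_)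
    simp only; ring
  · intro k _
    refine ((hi1 k).const_mul (Q.coeff k : ℂ)).congr (.of_forall fun l => ?_)
    simp only; ring

lemma coeff_nonneg_mul {P Q : ℝ[X]} (hP : ∀ k, 0 ≤ P.coeff k) (hQ : ∀ k, 0 ≤ Q.coeff k) (k : ℕ) :
    0 ≤ (P * Q).coeff k := by
  rw [coeff_mul]
  exact Finset.sum_nonneg fun i _ => mul_nonneg (hP _) (hQ _)

lemma coeff_nonneg_pow {P : ℝ[X]} (hP : ∀ k, 0 ≤ P.coeff k) (m k : ℕ) :
    0 ≤ (P ^ m).coeff k := by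
  induction m generalizing k with
  | zero => rw [pow_zero, coeff_one]; split_ifs <;> norm_num
  | succ m ih => rw [pow_succ]; exact coeff_nonneg_mul ih hP k

lemma LaplaceBound.one_sub_mul_rpow_pow {μ : Measure E} {φ : E → ℂ} {N : E → ℝ} {ψ : ℝ → ℝ}
    (hφ : Integrable φ μ) (hN : Measurable N) (hN0 : ∀ᵐ ξ ∂μ, 0 < N ξ)
    (hψ : IntegrableOn ψ (Ioi 0))
    (hexp : ∀ s ≥ 0, LaplaceBound μ φ N ψ (fun l => Real.exp (-s * l)))
    {δ θ α : ℝ} (hδ : 0 < δ) (hθ0 : 0 ≤ θ) (hθ1 : θ ≤ 1) (h0 : 0 < α) (h1 : α ≤ 1) (m : ℕ) :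
    LaplaceBound μ φ N ψ (fun l => (1 - θ * (1 - Real.exp (-δ * l)) ^ α) ^ m) := by
  obtain ⟨c, hc, hsum⟩ := exists_hasSum_one_sub_rpow h0 h1
  let Q : ℕ → ℝ[X] := fun K => (C (1 - θ) + C θ * ∑ k ∈ Finset.range K, C (c k) * X ^ k) ^ m
  have hQ : ∀ K k, 0 ≤ (Q K).coeff k := by
    intro K
    apply coeff_nonneg_pow
    intro k
    rw [coeff_add, coeff_C_mul, finsetSum_coeff]
    refine add_nonneg ?_ (mul_nonneg hθ0 (Finset.sum_nonneg fun i _ => ?_))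
    · rw [coeff_C]; split_ifs <;> linarith
    · rw [coeff_C_mul, coeff_X_pow]
      split_ifs <;> simp [hc]
  have hQe : ∀ K z, (Q K).eval z
      = (1 - θ + θ * ∑ k ∈ Finset.range K, c k * z ^ k) ^ m := by
    intro K z
    simp [Q, eval_finsetSum]
  have hz : ∀ l > 0, 0 < Real.exp (-δ * l) ∧ Real.exp (-δ * l) < 1 := fun l hl =>
    ⟨Real.exp_pos _, by rw [Real.exp_lt_one_iff]; nlinarith [mul_pos hδ hl]⟩
  refine LaplaceBound.of_tendsto hφ hN hN0 hψ
    (F := fun K l => (Q K).eval (Real.exp (-δ * l))) (fun K => ?_) (.of_forall fun K l hl => ?_)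
    (fun l hl => ?_) (.of_forall fun K => .eval_exp hφ hN hN0 hψ hexp hδ.le (hQ K))
  · exact ((Q K).continuous.comp (by fun_prop)).measurable
  · rw [hQe]
    obtain ⟨z0, z1⟩ := hz l hl
    have hs : ∑ k ∈ Finset.range K, c k * Real.exp (-δ * l) ^ k ≤ 1 := by
      refine (sum_le_hasSum _ (fun k _ => mul_nonneg (hc k) (by positivity)) (hsum _ z0 z1)).trans ?_
      have : 0 ≤ (1 - Real.exp (-δ * l)) ^ α := Real.rpow_nonneg (by linarith) _
      linarith
    have hs0 : 0 ≤ ∑ k ∈ Finset.range K, c k * Real.exp (-δ * l) ^ k :=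
      Finset.sum_nonneg fun k _ => mul_nonneg (hc k) (by positivity)
    rw [abs_pow]
    apply pow_le_one₀ (abs_nonneg _)
    rw [abs_le]
    constructor <;> nlinarith
  · simp only [hQe]
    obtain ⟨z0, z1⟩ := hz l hl
    have := (((hsum _ z0 z1).tendsto_sum_nat.const_mul θ).const_add (1 - θ)).pow m
    convert this using 2
    ring

lemma tendsto_one_sub_rpow_pow {α t l : ℝ} (h0 : 0 < α) (hl : 0 < l) :
    Tendsto (fun k : ℕ => (1 - t * √k ^ α / k * (1 - Real.exp (-(1 / √k) * l)) ^ α) ^ k) atTop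
      (𝓝 (Real.exp (-t * l ^ α))) := by
  have hs : Tendsto (fun k : ℕ => √(k : ℝ)) atTop atTop :=
    Real.tendsto_sqrt_atTop.comp tendsto_natCast_atTop_atTop
  have hd : Tendsto (fun m : ℝ => m * (1 - Real.exp (-(1 / m) * l))) atTop (𝓝 l) := by
    have hder : HasDerivAt (fun x : ℝ => -Real.exp (-x * l)) l 0 := by
      have : HasDerivAt (fun x : ℝ => -Real.exp (-x * l)) (-(Real.exp (-0 * l) * (-1 * l))) 0 :=
        (((hasDerivAt_id (0 : ℝ)).neg.mul_const l).exp).neg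
      simpa using this
    have := (hasDerivAt_iff_tendsto_slope_zero.1 hder).comp
      (tendsto_inv_atTop_nhdsGT_zero.mono_right (nhdsWithin_mono _ fun x hx => ne_of_gt hx))
    refine this.congr fun m => ?_
    simp
    left; ring
  have hg : Tendsto (fun k : ℕ => (k : ℝ) *
      (-(t * √k ^ α / k * (1 - Real.exp (-(1 / √k) * l)) ^ α))) atTop (𝓝 (-t * l ^ α)) := by
    have := ((hd.comp hs).rpow_const (p := α) (.inr h0.le)).const_mul (-t)
    refine this.congr' ?_
    filter_upwards [eventually_gt_atTop 0] with k hk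
    have hk' : (0 : ℝ) < k := by exact_mod_cast hk
    have : 0 ≤ 1 - Real.exp (-(1 / √k) * l) := by
      rw [sub_nonneg, Real.exp_le_one_iff]
      have : 0 < 1 / √(k:ℝ) * l := by positivity
      linarith
    simp only [Function.comp]
    rw [Real.mul_rpow (by positivity) this]
    field_simp
  simpa [sub_eq_add_neg] using Real.tendsto_one_add_pow_exp_of_tendsto hg

/-- Subordination: a bound that holds for all the exponentials `exp (-s λ)` holds for
`exp (-t λ ^ α)`. -/
theorem LaplaceBound.exp_neg_rpow {μ : Measure E} {φ : E → ℂ} {N : E → ℝ} {ψ : ℝ → ℝ}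
    (hφ : Integrable φ μ) (hN : Measurable N) (hN0 : ∀ᵐ ξ ∂μ, 0 < N ξ)
    (hψ : IntegrableOn ψ (Ioi 0))
    (hexp : ∀ s ≥ 0, LaplaceBound μ φ N ψ (fun l => Real.exp (-s * l)))
    {α t : ℝ} (h0 : 0 < α) (h1 : α ≤ 1) (ht : 0 ≤ t) :
    LaplaceBound μ φ N ψ (fun l => Real.exp (-t * l ^ α)) := by
  have hθ : ∀ᶠ k : ℕ in atTop, t * √k ^ α / k ≤ 1 := by
    obtain ⟨K, hK⟩ := exists_nat_ge (t ^ 2 + 1)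
    filter_upwards [eventually_ge_atTop K] with k hk
    have hk1 : t ^ 2 + 1 ≤ k := hK.trans (by exact_mod_cast hk)
    have hk1' : (1 : ℝ) ≤ k := by nlinarith
    have hs1 : 1 ≤ √(k : ℝ) := Real.one_le_sqrt.2 hk1'
    have h2 : √(k : ℝ) ^ α ≤ √k := by
      simpa using Real.rpow_le_rpow_of_exponent_le hs1 h1
    have h3 : t ≤ √(k : ℝ) := Real.le_sqrt_of_sq_le (by linarith)
    rw [div_le_one (by linarith)]
    calc t * √(k : ℝ) ^ α ≤ √k * √k := by gcongr
      _ = k := Real.mul_self_sqrt (by linarith)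
  refine LaplaceBound.of_tendsto hφ hN hN0 hψ (F := fun k l =>
      (1 - t * √k ^ α / k * (1 - Real.exp (-(1 / √k) * l)) ^ α) ^ k) (fun k => by fun_prop) ?_
    (fun l hl => tendsto_one_sub_rpow_pow h0 hl) ?_
  · filter_upwards [hθ] with k hk l hl
    have hz0 : 0 ≤ 1 - Real.exp (-(1 / √k) * l) := by
      rw [sub_nonneg, Real.exp_le_one_iff]
      have : 0 ≤ 1 / √(k:ℝ) * l := by positivity
      linarith
    have hp : (1 - Real.exp (-(1 / √k) * l)) ^ α ≤ 1 :=
      Real.rpow_le_one hz0 (by linarith [Real.exp_pos (-(1 / √k) * l)]) h0.le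
    have hp0 : 0 ≤ (1 - Real.exp (-(1 / √k) * l)) ^ α := Real.rpow_nonneg hz0 _
    have hk0 : 0 ≤ t * √k ^ α / k := by positivity
    rw [abs_pow]
    apply pow_le_one₀ (abs_nonneg _)
    rw [abs_le]
    constructor <;> nlinarith
  · filter_upwards [hθ, eventually_gt_atTop 0] with k hk hk0
    have hk0' : (0 : ℝ) < k := by exact_mod_cast hk0
    exact .one_sub_mul_rpow_pow hφ hN hN0 hψ hexp (by positivity) (by positivity) hk h0 h1 k

end Subordination

end

section

open Filter Topology
open scoped RealInnerProductSpace Real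

/-- The `v`-derivative in `z` of the Fourier phase `exp (-2πi⟪ξ, z⟫)`. -/
def dPhase {n : ℕ} (z v ξ : Rn n) : ℂ :=
  Complex.exp (-(2 * π * ⟪ξ, z⟫ : ℝ) * Complex.I) * (-(2 * π * Complex.I) * (⟪ξ, v⟫ : ℝ))

@[fun_prop]
lemma continuous_dPhase {n : ℕ} (z v : Rn n) : Continuous (dPhase z v) := by
  unfold dPhase
  fun_prop

lemma norm_dPhase_le {n : ℕ} (z v ξ : Rn n) : ‖dPhase z v ξ‖ ≤ 2 * π * ‖v‖ * ‖ξ‖ := by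
  unfold dPhase
  rw [norm_mul, ← Complex.ofReal_neg, Complex.norm_exp_ofReal_mul_I, one_mul, norm_mul,
    Complex.norm_real]
  have := norm_inner_le_norm (𝕜 := ℝ) ξ v
  simp only [norm_neg, norm_mul, Complex.norm_ofNat, Complex.norm_real, Complex.norm_I, mul_one]
  rw [Real.norm_of_nonneg Real.pi_pos.le]
  calc _ ≤ 2 * π * (‖ξ‖ * ‖v‖) := by gcongr
    _ = _ := by ring

lemma fderiv_fourier_apply_eq {n : ℕ} {f : Rn n → ℂ} (hf : Integrable f)
    (hf' : Integrable fun ξ => ‖ξ‖ * ‖f ξ‖) (z v : Rn n) :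
    DifferentiableAt ℝ (𝓕 f) z ∧ fderiv ℝ (𝓕 f) z v = ∫ ξ, dPhase z v ξ * f ξ := by
  refine ⟨(Real.hasFDerivAt_fourier hf hf' z).differentiableAt, ?_⟩
  rw [(Real.hasFDerivAt_fourier hf hf' z).fderiv, Real.fourier_eq']
  rw [ContinuousLinearMap.integral_apply]
  · congr 1
    ext ξ
    simp only [dPhase, smul_apply, VectorFourier.fourierSMulRight_apply,
      innerSL_apply_apply ℝ, smul_eq_mul, Complex.real_smul]
    push_cast
    ring_nf
  · have : Integrable (VectorFourier.fourierSMulRight (innerSL ℝ) f) (volume : Measure (Rn n)) := by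
      refine (hf'.const_mul (2 * π * ‖innerSL ℝ (E := Rn n)‖)).mono'
        hf.aestronglyMeasurable.fourierSMulRight (.of_forall fun ξ => ?_)
      refine (VectorFourier.norm_fourierSMulRight_le _ _ _).trans_eq ?_
      ring
    refine this.norm.mono' (by
      have hc : Continuous fun ξ : Rn n => Complex.exp (((-2 * π * ⟪ξ, z⟫ : ℝ) : ℂ) * Complex.I) := by
        fun_prop
      exact hc.aestronglyMeasurable.smul this.aestronglyMeasurable) (.of_forall fun ξ => ?_)
    rw [norm_smul, Complex.norm_exp_ofReal_mul_I, one_mul]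

lemma integrable_norm_pow_mul_exp_neg {n : ℕ} (hn : 1 ≤ n) {a t : ℝ} (ha : 0 < a) (ht : 0 < t)
    (k : ℕ) : Integrable fun ξ : Rn n => ‖ξ‖ ^ k * Real.exp (-t * ‖ξ‖ ^ a) := by
  have : Nonempty (Fin n) := ⟨⟨0, hn⟩⟩
  refine (integrable_fun_norm_addHaar (volume : Measure (Rn n))
    (f := fun r : ℝ => r ^ k * Real.exp (-t * r ^ a))).2 ?_
  refine (integrableOn_rpow_mul_exp_neg_mul_rpow (s := ((Module.finrank ℝ (Rn n) - 1 + k : ℕ) : ℝ))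
    (by linarith [Nat.cast_nonneg (α := ℝ) (Module.finrank ℝ (Rn n) - 1 + k)]) ha ht).congr_fun
    (fun r _ => ?_) measurableSet_Ioi
  simp only [Real.rpow_natCast, smul_eq_mul, pow_add]
  ring

lemma dKer_eq {n : ℕ} (hn : 1 ≤ n) {α t : ℝ} (hα : 0 < α) (ht : 0 < t) (j : Fin n) (z : Rn n) :
    dKer n α t j z = (∫ ξ, dPhase z (EuclideanSpace.single j 1) ξ
      * (Real.exp (-t * ‖ξ‖ ^ (2 * α)) : ℂ)).re := by
  have h0 := (integrable_norm_pow_mul_exp_neg hn (a := 2 * α) (by linarith) ht 0)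
  have h1 := (integrable_norm_pow_mul_exp_neg hn (a := 2 * α) (by linarith) ht 1)
  simp only [pow_zero, pow_one, one_mul] at h0 h1
  have hd := fderiv_fourier_apply_eq (f := fun ξ : Rn n => (Real.exp (-t * ‖ξ‖ ^ (2 * α)) : ℂ))
    h0.ofReal (by simpa only [Complex.norm_real, Real.norm_of_nonneg (Real.exp_nonneg _)] using h1)
    z (EuclideanSpace.single j 1)
  rw [← hd.2]
  have hg : gKer n α t = fun x => Complex.reCLM
      (𝓕 (fun ξ : Rn n => (Real.exp (-t * ‖ξ‖ ^ (2 * α)) : ℂ)) x) := by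
    ext x
    simp [gKer, Real.fourierInv_eq_fourier_comp_neg]
  unfold dKer
  rw [hg]
  have := (Complex.reCLM.hasFDerivAt.comp z hd.1.hasFDerivAt).fderiv
  simp only [Function.comp_def] at this
  rw [this]
  simp

lemma norm_integral_dPhase_gaussian {n : ℕ} (hn : 1 ≤ n) {S : ℝ} (hS : 0 < S) (z v : Rn n) :
    ‖∫ ξ, dPhase z v ξ * (Real.exp (-S * ‖ξ‖ ^ 2) : ℂ)‖ ≤
      (π / S) ^ (n / 2 : ℝ) * Real.exp (-π ^ 2 * ‖z‖ ^ 2 / S) * (2 * π ^ 2 * ‖z‖ * ‖v‖ / S) := by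
  have h0 := (integrable_norm_pow_mul_exp_neg hn (a := 2) (by norm_num) hS 0)
  have h1 := (integrable_norm_pow_mul_exp_neg hn (a := 2) (by norm_num) hS 1)
  simp only [pow_zero, pow_one, one_mul, Real.rpow_two] at h0 h1
  have hd := fderiv_fourier_apply_eq (f := fun ξ : Rn n => (Real.exp (-S * ‖ξ‖ ^ 2) : ℂ))
    h0.ofReal (by simpa only [Complex.norm_real, Real.norm_of_nonneg (Real.exp_nonneg _)] using h1)
    z v
  rw [← hd.2]
  have hG : 𝓕 (fun ξ : Rn n => (Real.exp (-S * ‖ξ‖ ^ 2) : ℂ)) = fun w =>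
      (((π / S) ^ (n / 2 : ℝ) * Real.exp (-π ^ 2 * ‖w‖ ^ 2 / S) : ℝ) : ℂ) := by
    ext w
    have := fourier_gaussian_innerProductSpace (V := Rn n) (b := (S : ℂ)) (by simpa using hS) w
    simp only [finrank_euclideanSpace, Fintype.card_fin] at this
    push_cast
    rw [this, Complex.ofReal_cpow (by positivity)]
    push_cast
    rfl
  have hder : HasFDerivAt (fun w : Rn n => (π / S) ^ (n / 2 : ℝ)
      * Real.exp (-π ^ 2 * ‖w‖ ^ 2 / S)) ((π / S) ^ (n / 2 : ℝ) •
        (Real.exp (-π ^ 2 * ‖z‖ ^ 2 / S) • ((-π ^ 2 / S) • ((2:ℝ) • innerSL ℝ z)))) z := by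
    have h2 : HasFDerivAt (fun w : Rn n => ‖w‖ ^ 2) ((2:ℝ) • innerSL ℝ z) z := by
      simpa only [ofNat_smul_eq_nsmul ℝ 2] using (hasStrictFDerivAt_norm_sq z).hasFDerivAt
    have h3 := h2.const_mul (-π ^ 2 / S)
    have h4 := (h3.exp).const_mul ((π / S) ^ (n / 2 : ℝ))
    have e : ∀ r : ℝ, -π ^ 2 / S * r = -π ^ 2 * r / S := fun r => by ring
    simpa only [e] using h4
  have hc := (Complex.ofRealCLM.hasFDerivAt.comp z hder).fderiv
  simp only [Function.comp_def, Complex.ofRealCLM_apply] at hc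
  rw [hG, hc]
  simp only [ContinuousLinearMap.comp_apply, Complex.ofRealCLM_apply, Complex.norm_real,
    smul_apply, smul_eq_mul, norm_mul, innerSL_apply_apply]
  have hi := norm_inner_le_norm (𝕜 := ℝ) z v
  rw [Real.norm_of_nonneg (by positivity), Real.norm_of_nonneg (Real.exp_nonneg _)]
  rw [mul_assoc]
  gcongr
  rw [norm_div, norm_neg, Real.norm_of_nonneg hS.le, Real.norm_of_nonneg (by positivity : 0 ≤ π^2),
    Real.norm_ofNat]
  calc π ^ 2 / S * (2 * ‖⟪z, v⟫‖) ≤ π ^ 2 / S * (2 * (‖z‖ * ‖v‖)) := by gcongr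
    _ = _ := by ring

lemma rpow_mul_exp_neg_div_le {κ S s a : ℝ} (m : ℕ) (hκ : 0 ≤ κ) (hm : κ ≤ m) (hs : 0 ≤ s)
    (hsS : s ≤ S) (hS : 0 < S) (ha : 0 < a) :
    (1 / S) ^ κ * Real.exp (-a / S) ≤ m.factorial * Real.exp 1 * (1 / (a + s)) ^ κ := by
  have h1 : (1 + a / S) ^ κ ≤ m.factorial * Real.exp (1 + a / S) := by
    have ha' : 0 ≤ a / S := by positivity
    calc (1 + a / S) ^ κ ≤ (1 + a / S) ^ (m : ℝ) :=
          Real.rpow_le_rpow_of_exponent_le (by linarith) hm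
      _ = (1 + a / S) ^ m := Real.rpow_natCast _ _
      _ ≤ _ := by
        have := Real.pow_div_factorial_le_exp (1 + a / S) (by positivity) m
        rwa [div_le_iff₀' (by positivity)] at this
  have h2 : (1 / S) ^ κ = (1 + a / S) ^ κ * (1 / (S + a)) ^ κ := by
    rw [← Real.mul_rpow (by positivity) (by positivity)]
    congr 1
    field_simp
  have h3 : (1 / (S + a)) ^ κ ≤ (1 / (a + s)) ^ κ :=
    Real.rpow_le_rpow (by positivity)
      (one_div_le_one_div_of_le (by linarith) (by linarith)) hκ
  calc (1 / S) ^ κ * Real.exp (-a / S)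
      ≤ (m.factorial * Real.exp (1 + a / S)) * (1 / (a + s)) ^ κ * Real.exp (-a / S) := by
        rw [h2]; gcongr
    _ = _ := by
        rw [Real.exp_add, neg_div, Real.exp_neg]
        field_simp

lemma integrableOn_exp_neg_mul_rpow {a κ : ℝ} (ha : 0 < a) (hκ : 0 < κ) :
    IntegrableOn (fun l : ℝ => Real.exp (-(a * l)) * l ^ (κ - 1)) (Ioi 0) := by
  refine (integrableOn_rpow_mul_exp_neg_mul_rpow (s := κ - 1) (p := 1) (by linarith) one_pos
    ha).congr_fun (fun l _ => ?_) measurableSet_Ioi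
  simp [mul_comm]

/-- Pointwise bound for `∂_j 𝔤_t^α`. -/
theorem exists_abs_dKer_le {n : ℕ} (hn : 1 ≤ n) {α : ℝ} (hα0 : 0 < α) (hα : α ≤ 1) :
    ∃ A > (0 : ℝ), ∀ t > 0, ∀ (j : Fin n) (z : Rn n), |dKer n α t j z| ≤
      A * ‖z‖ * ∫ l in Ioi (0 : ℝ), Real.exp (-(π ^ 2 * ‖z‖ ^ 2 * l)) * l ^ (n / 2 : ℝ)
        * Real.exp (-t * l ^ α) := by
  have : Nonempty (Fin n) := ⟨⟨0, hn⟩⟩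
  set κ : ℝ := n / 2 + 1 with hκ
  have hκ0 : 0 < κ := by positivity
  have hκn : κ ≤ (n + 1 : ℕ) := by
    have : (0:ℝ) ≤ n := by positivity
    push_cast; linarith
  set A : ℝ := π ^ (n / 2 : ℝ) * (2 * π ^ 2) * ((n + 1).factorial * Real.exp 1) / Real.Gamma κ
  have hG : 0 < Real.Gamma κ := Real.Gamma_pos_of_pos hκ0
  refine ⟨A, by positivity, fun t ht j z => ?_⟩
  have hN0 : ∀ᵐ ξ : Rn n, 0 < ‖ξ‖ ^ 2 := by
    have : ∀ᵐ ξ : Rn n, ξ ≠ 0 := by simp [ae_iff, measure_singleton]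
    filter_upwards [this] with ξ hξ
    positivity
  have hsym : ∀ ξ : Rn n, (‖ξ‖ ^ 2) ^ α = ‖ξ‖ ^ (2 * α) := by
    intro ξ
    rw [Real.rpow_mul (norm_nonneg _), Real.rpow_two]
  rcases eq_or_ne z 0 with rfl | hz
  · have : dKer n α t j 0 = 0 := by
      rw [dKer_eq hn hα0 ht]
      have hodd : ∫ ξ : Rn n, dPhase 0 (EuclideanSpace.single j 1) ξ
          * (Real.exp (-t * ‖ξ‖ ^ (2 * α)) : ℂ) = 0 := by
        have := integral_neg_eq_self (fun ξ : Rn n => dPhase 0 (EuclideanSpace.single j 1) ξ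
          * (Real.exp (-t * ‖ξ‖ ^ (2 * α)) : ℂ)) volume
        simp only [dPhase, inner_neg_left, norm_neg, inner_zero_right, Complex.ofReal_neg,
          mul_neg, neg_mul, neg_neg, integral_neg, mul_zero, neg_zero, Complex.ofReal_zero,
          zero_mul] at this ⊢
        linear_combination (-1/2) * this
      rw [hodd, Complex.zero_re]
    simp [this]
  have hz0 : 0 < ‖z‖ := norm_pos_iff.2 hz
  have ha : 0 < π ^ 2 * ‖z‖ ^ 2 := by positivity
  set a := π ^ 2 * ‖z‖ ^ 2
  set v : Rn n := EuclideanSpace.single j 1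
  have hv : ‖v‖ = 1 := by simp [v]
  have hψ : IntegrableOn (fun l : ℝ => A * ‖z‖ * (Real.exp (-(a * l)) * l ^ (n / 2 : ℝ)))
      (Ioi 0) := by
    have := (integrableOn_exp_neg_mul_rpow ha hκ0).const_mul (A * ‖z‖)
    rw [hκ, add_sub_cancel_right] at this
    exact this
  have key : ∀ η > 0, LaplaceBound volume
      (fun ξ : Rn n => dPhase z v ξ * (Real.exp (-η * ‖ξ‖ ^ 2) : ℂ)) (fun ξ => ‖ξ‖ ^ 2)
      (fun l => A * ‖z‖ * (Real.exp (-(a * l)) * l ^ (n / 2 : ℝ)))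
      (fun l => Real.exp (-t * l ^ α)) := by
    intro η hη
    refine LaplaceBound.exp_neg_rpow ?_ (by fun_prop) hN0 hψ (fun s hs => ?_) hα0 hα ht.le
    · refine ((integrable_norm_pow_mul_exp_neg hn (a := 2) (by norm_num) hη 1).const_mul
        (2 * π)).mono' (Continuous.aestronglyMeasurable (by fun_prop)) (.of_forall fun ξ => ?_)
      rw [norm_mul, Complex.norm_real, Real.norm_of_nonneg (Real.exp_nonneg _), pow_one,
        Real.rpow_two, ← mul_assoc]
      gcongr
      simpa [hv] using norm_dPhase_le z v ξ
    · have hS : 0 < s + η := by linarith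
      unfold LaplaceBound
      have e1 : ∫ ξ : Rn n, dPhase z v ξ * (Real.exp (-η * ‖ξ‖ ^ 2) : ℂ)
          * (Real.exp (-s * ‖ξ‖ ^ 2) : ℂ)
          = ∫ ξ : Rn n, dPhase z v ξ * (Real.exp (-(s + η) * ‖ξ‖ ^ 2) : ℂ) := by
        congr 1; ext ξ
        rw [mul_assoc, ← Complex.ofReal_mul, ← Real.exp_add]
        ring_nf
      have e2 : ∫ l in Ioi (0 : ℝ), A * ‖z‖ * (Real.exp (-(a * l)) * l ^ (n / 2 : ℝ))
          * Real.exp (-s * l) = A * ‖z‖ * ((1 / (a + s)) ^ κ * Real.Gamma κ) := by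
        rw [← Real.integral_rpow_mul_exp_neg_mul_Ioi hκ0 (by positivity), ← integral_const_mul]
        refine integral_congr_ae (.of_forall fun l => ?_)
        simp only [hκ, add_sub_cancel_right]
        rw [show -((a + s) * l) = -(a * l) + -s * l by ring, Real.exp_add]
        ring
      rw [e1, e2]
      refine (norm_integral_dPhase_gaussian hn hS z v).trans ?_
      have := rpow_mul_exp_neg_div_le (n + 1) hκ0.le hκn hs (by linarith : s ≤ s + η) hS ha
      have e3 : (π / (s + η)) ^ (n / 2 : ℝ) / (s + η)
          = π ^ (n / 2 : ℝ) * (1 / (s + η)) ^ κ := by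
        rw [hκ, Real.rpow_add_one (by positivity), ← mul_assoc,
          ← Real.mul_rpow (by positivity) (by positivity), mul_one_div, mul_one_div]
      calc _ = (π / (s + η)) ^ (n / 2 : ℝ) / (s + η) * Real.exp (-a / (s + η))
            * (2 * π ^ 2 * ‖z‖) := by
            rw [hv]; simp only [a]; ring_nf
        _ = π ^ (n / 2 : ℝ) * (2 * π ^ 2 * ‖z‖)
            * ((1 / (s + η)) ^ κ * Real.exp (-a / (s + η))) := by rw [e3]; ring
        _ ≤ π ^ (n / 2 : ℝ) * (2 * π ^ 2 * ‖z‖)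
            * ((n + 1).factorial * Real.exp 1 * (1 / (a + s)) ^ κ) := by gcongr
        _ = _ := by simp only [A]; field_simp
  have hlim : Tendsto (fun k : ℕ => ∫ ξ : Rn n, dPhase z v ξ
      * (Real.exp (-(1 / ((k:ℝ) + 1)) * ‖ξ‖ ^ 2) : ℂ) * (Real.exp (-t * (‖ξ‖ ^ 2) ^ α) : ℂ)) atTop
      (𝓝 (∫ ξ, dPhase z v ξ * (Real.exp (-t * ‖ξ‖ ^ (2 * α)) : ℂ))) := by
    apply tendsto_integral_of_dominated_convergence
      (fun ξ => 2 * π * (‖ξ‖ ^ 1 * Real.exp (-t * ‖ξ‖ ^ (2 * α))))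
    · intro k
      refine (Measurable.mul (Measurable.mul ?_ ?_) ?_).aestronglyMeasurable
      · exact (continuous_dPhase z v).measurable
      · fun_prop
      · fun_prop
    · exact (integrable_norm_pow_mul_exp_neg hn (by linarith) ht 1).const_mul _
    · intro k
      refine .of_forall fun ξ => ?_
      rw [norm_mul, norm_mul, Complex.norm_real, Real.norm_of_nonneg (Real.exp_nonneg _),
        Complex.norm_real, Real.norm_of_nonneg (Real.exp_nonneg _), hsym, ← mul_assoc]
      have h1 : Real.exp (-(1 / ((k:ℝ) + 1)) * ‖ξ‖ ^ 2) ≤ 1 := by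
        rw [Real.exp_le_one_iff]
        have : 0 ≤ (1 / ((k:ℝ) + 1)) * ‖ξ‖ ^ 2 := by positivity
        linarith
      have h2 := norm_dPhase_le z v ξ
      rw [hv, mul_one] at h2
      rw [pow_one]
      refine mul_le_mul_of_nonneg_right ?_ (Real.exp_nonneg _)
      exact (mul_le_of_le_one_right (norm_nonneg _) h1).trans h2
    · refine .of_forall fun ξ => ?_
      simp only [hsym]
      refine Tendsto.mul_const _ ?_
      have h0 := (((tendsto_one_div_add_atTop_nhds_zero_nat (𝕜 := ℝ)).neg.mul_const
        (‖ξ‖ ^ 2)).rexp)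
      have := ((Complex.continuous_ofReal.tendsto _).comp h0).const_mul (dPhase z v ξ)
      simpa using this
  rw [dKer_eq hn hα0 ht]
  refine (Complex.abs_re_le_norm _).trans ?_
  refine (le_of_tendsto hlim.norm (.of_forall fun k => key (1 / ((k:ℝ) + 1))
    (by positivity))).trans_eq ?_
  rw [← integral_const_mul]
  simp only [mul_assoc]

end

section

open Filter Topology
open scoped RealInnerProductSpace Real

/-- The pointwise majorant of `∂_j 𝔤_t^α` given by subordination. -/
def kerBound (n : ℕ) (α t : ℝ) (z : Rn n) : ℝ≥0∞ :=
  ENNReal.ofReal ‖z‖ * ∫⁻ l in Ioi (0 : ℝ), ENNReal.ofReal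
    (Real.exp (-(π ^ 2 * ‖z‖ ^ 2 * l)) * l ^ (n / 2 : ℝ) * Real.exp (-t * l ^ α))

/-- The Riesz kernel of order `γ`, up to a constant, as a superposition of indicators of balls. -/
def rieszKer (n : ℕ) (γ : ℝ) (z : Rn n) : ℝ≥0∞ :=
  ∫⁻ ρ in Ioi ‖z‖, ENNReal.ofReal (ρ ^ (γ - n - 1))

lemma measurable_kerBound (n : ℕ) (α : ℝ) :
    Measurable fun q : ℝ × Rn n => kerBound n α q.1 q.2 := by
  unfold kerBound
  refine Measurable.mul (by fun_prop) ?_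
  exact Measurable.lintegral_prod_right' (f := fun r : (ℝ × Rn n) × ℝ => ENNReal.ofReal
    (Real.exp (-(π ^ 2 * ‖r.1.2‖ ^ 2 * r.2)) * r.2 ^ (n / 2 : ℝ)
      * Real.exp (-r.1.1 * r.2 ^ α))) (by fun_prop)

lemma measurable_kerBound_sub (n : ℕ) (α t : ℝ) (x : Rn n) :
    Measurable fun q : ℝ × Rn n => kerBound n α (t - q.1) (x - q.2) := by
  have h2 : Measurable fun q : ℝ × Rn n => (t - q.1, x - q.2) := by fun_prop
  have := (measurable_kerBound n α).comp h2
  simpa only [Function.comp_def] using this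

lemma exists_enorm_dKer_le {n : ℕ} (hn : 1 ≤ n) {α : ℝ} (hα0 : 0 < α) (hα : α ≤ 1) :
    ∃ A > (0 : ℝ), ∀ t > 0, ∀ (j : Fin n) (z : Rn n),
      ‖dKer n α t j z‖ₑ ≤ ENNReal.ofReal A * kerBound n α t z := by
  obtain ⟨A, hA, h⟩ := exists_abs_dKer_le hn hα0 hα
  refine ⟨A, hA, fun t ht j z => ?_⟩
  rw [Real.enorm_eq_ofReal_abs]
  refine (ENNReal.ofReal_le_ofReal (h t ht j z)).trans ?_
  rw [ENNReal.ofReal_mul (by positivity), ENNReal.ofReal_mul hA.le, kerBound, ← mul_assoc]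
  gcongr
  rw [integral_eq_lintegral_of_nonneg_ae]
  · exact ENNReal.ofReal_toReal_le
  · filter_upwards [ae_restrict_mem measurableSet_Ioi] with l hl
    have : 0 < l := hl
    positivity
  · exact Measurable.aestronglyMeasurable (by fun_prop)

lemma lintegral_exp_neg_mul {c : ℝ} (hc : 0 < c) :
    ∫⁻ t in Ioi (0 : ℝ), ENNReal.ofReal (Real.exp (-t * c)) = ENNReal.ofReal c⁻¹ := by
  have hi : IntegrableOn (fun t : ℝ => Real.exp (-t * c)) (Ioi 0) := by
    simpa only [neg_mul, mul_comm c] using exp_neg_integrableOn_Ioi 0 hc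
  rw [← ofReal_integral_eq_lintegral_ofReal hi (.of_forall fun t => Real.exp_nonneg _)]
  congr 1
  simpa [mul_comm c] using Real.integral_rpow_mul_exp_neg_mul_Ioi one_pos hc

lemma exists_lintegral_kerBound_le {n : ℕ} {α : ℝ} (h2α : 2 * α - 1 < n) : ∃ A > (0 : ℝ), ∀ z : Rn n,
      ∫⁻ t in Ioi (0 : ℝ), kerBound n α t z ≤ ENNReal.ofReal A * rieszKer n (2 * α - 1) z := by
  set κ : ℝ := n / 2 + 1 - α with hκ
  have hκ0 : 0 < κ := by linarith
  have hG : 0 < Real.Gamma κ := Real.Gamma_pos_of_pos hκ0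
  refine ⟨(1 / π ^ 2) ^ κ * Real.Gamma κ * (n - (2 * α - 1)),
    mul_pos (by positivity) (by linarith), fun z => ?_⟩
  rcases eq_or_ne z 0 with rfl | hz
  · simp [kerBound]
  have hz0 : 0 < ‖z‖ := norm_pos_iff.2 hz
  have ha : 0 < π ^ 2 * ‖z‖ ^ 2 := by positivity
  have hR : rieszKer n (2 * α - 1) z
      = ENNReal.ofReal (‖z‖ ^ (2 * α - 1 - n) / (n - (2 * α - 1))) := by
    rw [rieszKer, ← ofReal_integral_eq_lintegral_ofReal
      (integrableOn_Ioi_rpow_of_lt (by linarith) hz0)]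
    · rw [integral_Ioi_rpow_of_lt (by linarith) hz0]
      congr 1
      rw [show 2 * α - 1 - n - 1 + 1 = -(n - (2 * α - 1)) by ring, div_neg, neg_div, neg_neg,
        neg_sub]
    · filter_upwards [ae_restrict_mem measurableSet_Ioi] with l hl
      have : 0 < l := hz0.trans hl
      positivity
  unfold kerBound
  rw [lintegral_const_mul' _ _ ENNReal.ofReal_ne_top, lintegral_lintegral_swap
    (Measurable.aemeasurable (by unfold Function.uncurry; fun_prop))]
  have e1 : ∀ l ∈ Ioi (0 : ℝ), ∫⁻ t in Ioi (0 : ℝ), ENNReal.ofReal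
      (Real.exp (-(π ^ 2 * ‖z‖ ^ 2 * l)) * l ^ (n / 2 : ℝ) * Real.exp (-t * l ^ α))
      = ENNReal.ofReal (l ^ (κ - 1) * Real.exp (-(π ^ 2 * ‖z‖ ^ 2 * l))) := by
    intro l hl
    have hl0 : 0 < l := hl
    have hp : 0 ≤ Real.exp (-(π ^ 2 * ‖z‖ ^ 2 * l)) * l ^ (n / 2 : ℝ) := by positivity
    simp only [ENNReal.ofReal_mul hp]
    rw [lintegral_const_mul' _ _ ENNReal.ofReal_ne_top, lintegral_exp_neg_mul (by positivity),
      ← ENNReal.ofReal_mul hp]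
    congr 1
    rw [hκ, show (n : ℝ) / 2 + 1 - α - 1 = n / 2 + -α by ring, Real.rpow_add hl0,
      Real.rpow_neg hl0.le]
    ring
  rw [setLIntegral_congr_fun measurableSet_Ioi e1]
  have hi : IntegrableOn (fun l : ℝ => l ^ (κ - 1) * Real.exp (-(π ^ 2 * ‖z‖ ^ 2 * l)))
      (Ioi 0) := by
    simpa only [mul_comm] using integrableOn_exp_neg_mul_rpow ha hκ0
  rw [← ofReal_integral_eq_lintegral_ofReal hi, Real.integral_rpow_mul_exp_neg_mul_Ioi hκ0 ha, hR,
    ← ENNReal.ofReal_mul (norm_nonneg _), ← ENNReal.ofReal_mul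
      (mul_nonneg (by positivity) (by linarith))]
  · apply ENNReal.ofReal_le_ofReal
    have hne : (n : ℝ) - (2 * α - 1) ≠ 0 := by linarith
    have e2 : ‖z‖ * (1 / (π ^ 2 * ‖z‖ ^ 2)) ^ κ
        = (1 / π ^ 2) ^ κ * ‖z‖ ^ (2 * α - 1 - n) := by
      rw [← one_div_mul_one_div, Real.mul_rpow (by positivity) (by positivity)]
      have : (1 / ‖z‖ ^ 2) ^ κ = ‖z‖ ^ (-(2 * κ)) := by
        rw [one_div, Real.inv_rpow (by positivity), Real.rpow_neg hz0.le, Real.rpow_mul hz0.le,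
          Real.rpow_two]
      rw [this, show 2 * α - 1 - n = 1 + -(2 * κ) by rw [hκ]; ring, Real.rpow_add hz0,
        Real.rpow_one]
      ring
    rw [← mul_assoc, e2]
    apply le_of_eq
    field_simp
  · filter_upwards [ae_restrict_mem measurableSet_Ioi] with l hl
    have : 0 < l := hl
    positivity

lemma setLIntegral_comp_sub_le (f : ℝ → ℝ≥0∞) (t : ℝ) :
    ∫⁻ s in Ioo 0 t, f (t - s) ≤ ∫⁻ s in Ioi 0, f s := by
  rw [← lintegral_indicator measurableSet_Ioi,
    ← lintegral_sub_left_eq_self ((Ioi 0).indicator f) t, ← lintegral_indicator measurableSet_Ioo]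
  refine lintegral_mono fun s => ?_
  by_cases hs : s ∈ Ioo 0 t
  · rw [indicator_of_mem hs, indicator_of_mem (show t - s ∈ Ioi 0 by simpa using hs.2)]
  · rw [indicator_of_notMem hs]; exact zero_le

/-- The Duhamel term is pointwise dominated by a Riesz potential. -/
theorem exists_enorm_duhamel_le {n : ℕ} (hn : 1 ≤ n) (b : ℕ) {α : ℝ} (hα0 : 0 < α) (hα : α ≤ 1)
    (h2α : 2 * α - 1 < n) : ∃ A > (0 : ℝ), ∀ u : ℝ → Rn n → ℝ, Measurable (Function.uncurry u) →
      ∀ t x, ‖∑ j : Fin n, ∫ s in Ioc (0:ℝ) t,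
          conv n (dKer n α (t - s) j) (fun y => |u s y| ^ b * u s y) x‖ₑ
        ≤ ENNReal.ofReal A * ∫⁻ y, rieszKer n (2 * α - 1) (x - y) * timeSup n u y ^ (b + 1) := by
  obtain ⟨A, hA, hker⟩ := exists_enorm_dKer_le hn hα0 hα
  obtain ⟨A', hA', hfin⟩ := exists_lintegral_kerBound_le h2α
  refine ⟨n * (A * A'), by positivity, fun u hu t x => ?_⟩
  have hsup : ∀ y, ∀ᵐ s ∂volume.restrict (Ioi (0:ℝ)), ‖u s y‖ₑ ≤ timeSup n u y := by
    intro y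
    simp only [Real.enorm_eq_ofReal_abs]
    exact ae_le_essSup
  have hmeas : Measurable fun q : ℝ × Rn n =>
      kerBound n α (t - q.1) (x - q.2) * ‖u q.1 q.2‖ₑ ^ (b + 1) := by
    refine (measurable_kerBound_sub n α t x).mul ?_
    have h1 : Measurable fun q : ℝ × Rn n => ‖u q.1 q.2‖ₑ := measurable_enorm.comp hu
    exact h1.pow_const _
  have hy : ∀ y, ∫⁻ s in Ioo 0 t, kerBound n α (t - s) (x - y) * ‖u s y‖ₑ ^ (b + 1)
      ≤ ENNReal.ofReal A' * (rieszKer n (2 * α - 1) (x - y) * timeSup n u y ^ (b + 1)) := by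
    intro y
    calc ∫⁻ s in Ioo 0 t, kerBound n α (t - s) (x - y) * ‖u s y‖ₑ ^ (b + 1)
        ≤ ∫⁻ s in Ioo 0 t, kerBound n α (t - s) (x - y) * timeSup n u y ^ (b + 1) := by
          refine lintegral_mono_ae ?_
          filter_upwards [ae_mono (Measure.restrict_mono Ioo_subset_Ioi_self le_rfl)
            (hsup y)] with s hs
          gcongr
      _ = (∫⁻ s in Ioo 0 t, kerBound n α (t - s) (x - y)) * timeSup n u y ^ (b + 1) := by
          refine lintegral_mul_const _ ?_
          have h2 : Measurable fun s : ℝ => (s, y) := by fun_prop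
          have := (measurable_kerBound_sub n α t x).comp h2
          simpa only [Function.comp_def] using this
      _ ≤ (ENNReal.ofReal A' * rieszKer n (2 * α - 1) (x - y))
            * timeSup n u y ^ (b + 1) := by
          gcongr
          exact (setLIntegral_comp_sub_le (fun s => kerBound n α s (x - y)) t).trans (hfin _)
      _ = _ := by rw [mul_assoc]
  have hj : ∀ j : Fin n, ‖∫ s in Ioc (0:ℝ) t,
      conv n (dKer n α (t - s) j) (fun y => |u s y| ^ b * u s y) x‖ₑ
      ≤ ENNReal.ofReal (A * A') *
        ∫⁻ y, rieszKer n (2 * α - 1) (x - y) * timeSup n u y ^ (b + 1) := by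
    intro j
    refine (enorm_integral_le_lintegral_enorm _).trans ?_
    rw [← restrict_Ioo_eq_restrict_Ioc]
    calc ∫⁻ s in Ioo 0 t, ‖conv n (dKer n α (t - s) j) (fun y => |u s y| ^ b * u s y) x‖ₑ
        ≤ ∫⁻ s in Ioo 0 t, ENNReal.ofReal A *
            ∫⁻ y, kerBound n α (t - s) (x - y) * ‖u s y‖ₑ ^ (b + 1) := by
          refine setLIntegral_mono' measurableSet_Ioo fun s hs => ?_
          refine (enorm_integral_le_lintegral_enorm _).trans ?_
          rw [← lintegral_const_mul' _ _ ENNReal.ofReal_ne_top]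
          refine lintegral_mono fun y => ?_
          have e : ‖|u s y| ^ b * u s y‖ₑ = ‖u s y‖ₑ ^ (b + 1) := by
            rw [enorm_mul, enorm_pow, Real.enorm_abs, pow_succ]
          rw [enorm_mul, e, ← mul_assoc]
          exact mul_le_mul' (hker _ (by linarith [hs.2]) j _) le_rfl
      _ = ENNReal.ofReal A * ∫⁻ y, ∫⁻ s in Ioo 0 t,
            kerBound n α (t - s) (x - y) * ‖u s y‖ₑ ^ (b + 1) := by
          rw [lintegral_const_mul' _ _ ENNReal.ofReal_ne_top]
          exact congrArg _ (lintegral_lintegral_swap (μ := volume.restrict (Ioo 0 t))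
            (f := fun s y => kerBound n α (t - s) (x - y) * ‖u s y‖ₑ ^ (b + 1))
            hmeas.aemeasurable)
      _ ≤ ENNReal.ofReal A * ∫⁻ y, ENNReal.ofReal A' *
            (rieszKer n (2 * α - 1) (x - y) * timeSup n u y ^ (b + 1)) := by
          exact mul_le_mul_right (lintegral_mono hy) _
      _ = _ := by
          rw [lintegral_const_mul' _ _ ENNReal.ofReal_ne_top, ← mul_assoc,
            ENNReal.ofReal_mul hA.le]
  refine (enorm_sum_le _ _).trans ((Finset.sum_le_sum fun j _ => hj j).trans_eq ?_)
  rw [Finset.sum_const, Finset.card_univ, Fintype.card_fin, nsmul_eq_mul,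
    ENNReal.ofReal_mul (p := (n : ℝ)) (by positivity), ENNReal.ofReal_natCast, mul_assoc]

end

section

open Metric

/-- The average of `F` over the closed ball of centre `x` and radius `ρ`. -/
def ballAvg {n : ℕ} (F : Rn n → ℝ≥0∞) (x : Rn n) (ρ : ℝ) : ℝ≥0∞ :=
  (∫⁻ y in closedBall x ρ, F y) / volume (closedBall x ρ)

/-- The (dyadic-radius, centred) Hardy–Littlewood maximal function. -/
def maxFn {n : ℕ} (F : Rn n → ℝ≥0∞) (x : Rn n) : ℝ≥0∞ :=
  ⨆ k : ℤ, ballAvg F x (2 ^ k)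

lemma volume_closedBall_Rn {n : ℕ} (x : Rn n) {ρ : ℝ} (hρ : 0 ≤ ρ) :
    volume (closedBall x ρ) = ENNReal.ofReal (ρ ^ n) * volume (ball (0 : Rn n) 1) := by
  rw [Measure.addHaar_closedBall _ _ hρ, finrank_euclideanSpace_fin]

lemma volume_closedBall_Rn_ne_zero {n : ℕ} (x : Rn n) {ρ : ℝ} (hρ : 0 < ρ) :
    volume (closedBall x ρ) ≠ 0 := (measure_closedBall_pos _ _ hρ).ne'

lemma volume_closedBall_Rn_ne_top {n : ℕ} (x : Rn n) (ρ : ℝ) :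
    volume (closedBall x ρ) ≠ ∞ := measure_closedBall_lt_top.ne

lemma setLIntegral_closedBall_eq {n : ℕ} (F : Rn n → ℝ≥0∞) (x : Rn n) {ρ : ℝ} (hρ : 0 < ρ) :
    ∫⁻ y in closedBall x ρ, F y
      = volume (closedBall x ρ) * ballAvg F x ρ := by
  rw [ballAvg, ENNReal.mul_div_cancel (volume_closedBall_Rn_ne_zero x hρ)
    (volume_closedBall_Rn_ne_top x ρ)]

lemma measurable_setLIntegral_closedBall {n : ℕ} {F : Rn n → ℝ≥0∞} (hF : Measurable F) (ρ : ℝ) :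
    Measurable fun x => ∫⁻ y in closedBall x ρ, F y := by
  have hs : MeasurableSet {q : Rn n × Rn n | dist q.2 q.1 ≤ ρ} :=
    measurableSet_le (by fun_prop) measurable_const
  have h := ((hF.comp measurable_snd).indicator hs).lintegral_prod_right' (ν := volume)
  convert h using 2 with x
  rw [← lintegral_indicator measurableSet_closedBall]
  rfl

lemma measurable_maxFn {n : ℕ} {F : Rn n → ℝ≥0∞} (hF : Measurable F) :
    Measurable (maxFn F) := by
  refine Measurable.iSup fun k => ?_
  simp only [ballAvg]
  refine (measurable_setLIntegral_closedBall hF _).div ?_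
  simp only [volume_closedBall_Rn _ (zpow_pos (two_pos : (0 : ℝ) < 2) k).le]
  exact measurable_const

lemma setLIntegral_closedBall_le_maxFn {n : ℕ} (F : Rn n → ℝ≥0∞) (x : Rn n) {ρ : ℝ}
    (hρ : 0 < ρ) :
    ∫⁻ y in closedBall x ρ, F y ≤ volume (closedBall x (2 * ρ)) * maxFn F x := by
  obtain ⟨k, hk1, hk2⟩ := exists_mem_Ioc_zpow hρ (one_lt_two : (1 : ℝ) < 2)
  have hk3 : (2 : ℝ) ^ (k + 1) ≤ 2 * ρ := by
    rw [zpow_add_one₀ two_ne_zero]; linarith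
  calc ∫⁻ y in closedBall x ρ, F y ≤ ∫⁻ y in closedBall x (2 ^ (k + 1)), F y :=
        lintegral_mono_set (closedBall_subset_closedBall hk2)
    _ = volume (closedBall x ((2 : ℝ) ^ (k + 1))) * ballAvg F x (2 ^ (k + 1)) :=
        setLIntegral_closedBall_eq F x (by positivity)
    _ ≤ _ := mul_le_mul' (measure_mono (closedBall_subset_closedBall hk3))
        (le_iSup (fun k : ℤ => ballAvg F x (2 ^ k)) (k + 1))

lemma maxFn_mono {n : ℕ} {F G : Rn n → ℝ≥0∞} (h : F ≤ G) (x : Rn n) : maxFn F x ≤ maxFn G x := by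
  refine iSup_mono fun k => ?_
  simp only [ballAvg]
  gcongr with y
  exact h y

lemma maxFn_add_const_le {n : ℕ} (F : Rn n → ℝ≥0∞) (c : ℝ≥0∞) (x : Rn n) :
    maxFn (fun y => F y + c) x ≤ maxFn F x + c := by
  refine iSup_le fun k => ?_
  have h0 : (0 : ℝ) < 2 ^ k := by positivity
  rw [ballAvg, lintegral_add_right _ measurable_const, ENNReal.add_div, ← ballAvg,
    setLIntegral_const, ENNReal.mul_div_cancel_right (volume_closedBall_Rn_ne_zero x h0)
      (volume_closedBall_Rn_ne_top x _)]
  gcongr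
  exact le_iSup (fun k : ℤ => ballAvg F x (2 ^ k)) k

/-- Weak type `(1,1)` bound for the maximal function. -/
theorem mul_volume_maxFn_gt_le {n : ℕ} (hn : 1 ≤ n) (F : Rn n → ℝ≥0∞) {t : ℝ≥0∞} (ht0 : t ≠ 0)
    (ht : t ≠ ∞) :
    t * volume {x | t < maxFn F x} ≤ 5 ^ n * ∫⁻ y, F y := by
  by_cases hF : ∫⁻ y, F y = ∞
  · simp [hF, ENNReal.mul_top]
  set S := {x | t < maxFn F x}
  have hS : ∀ x : Rn n, ∃ r : ℝ, 0 < r ∧ (x ∈ S →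
      t * volume (closedBall x r) ≤ ∫⁻ y in closedBall x r, F y) := by
    intro x
    by_cases hx : x ∈ S
    · obtain ⟨k, hk⟩ := lt_iSup_iff.1 (show t < maxFn F x from hx)
      refine ⟨2 ^ k, by positivity, fun _ => ?_⟩
      rw [setLIntegral_closedBall_eq F x (by positivity), mul_comm]
      gcongr
    · exact ⟨1, one_pos, fun h => absurd h hx⟩
  choose r hr0 hr using hS
  set v := volume (ball (0 : Rn n) 1)
  have hv0 : v ≠ 0 := (measure_ball_pos _ _ one_pos).ne'
  have hv : v ≠ ∞ := measure_ball_lt_top.ne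
  have hbd : ∀ x ∈ S, r x ≤ max 1 ((∫⁻ y, F y) / (t * v)).toReal := by
    intro x hx
    by_cases h1 : r x ≤ 1
    · exact h1.trans (le_max_left _ _)
    refine le_trans ?_ (le_max_right _ _)
    push Not at h1
    have h2 : ENNReal.ofReal (r x) ≤ (∫⁻ y, F y) / (t * v) := by
      rw [ENNReal.le_div_iff_mul_le (Or.inl (mul_ne_zero ht0 hv0))
        (Or.inl (ENNReal.mul_ne_top ht hv))]
      calc ENNReal.ofReal (r x) * (t * v) ≤ ENNReal.ofReal (r x ^ n) * (t * v) := by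
            gcongr
            exact le_self_pow₀ h1.le (by omega)
        _ = t * volume (closedBall x (r x)) := by
            rw [volume_closedBall_Rn x (hr0 x).le]; ring
        _ ≤ ∫⁻ y in closedBall x (r x), F y := hr x hx
        _ ≤ _ := setLIntegral_le_lintegral _ _
    exact (ENNReal.ofReal_le_iff_le_toReal
      (ENNReal.div_ne_top hF (mul_ne_zero ht0 hv0))).1 h2
  obtain ⟨u, huS, hdisj, hcov⟩ := Vitali.exists_disjoint_subfamily_covering_enlargement_closedBall
    S (fun x : Rn n => x) r _ hbd 5 (by norm_num)
  have hcount : u.Countable := hdisj.countable_of_nonempty_interior fun x _ =>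
    ⟨x, mem_interior_iff_mem_nhds.2 (closedBall_mem_nhds x (hr0 x))⟩
  have hsub : S ⊆ ⋃ x ∈ u, closedBall x (5 * r x) := by
    intro x hx
    obtain ⟨y, hy, hxy⟩ := hcov x hx
    exact mem_iUnion₂.2 ⟨y, hy, hxy (mem_closedBall_self (hr0 x).le)⟩
  calc t * volume S ≤ t * ∑' x : u, volume (closedBall (x : Rn n) (5 * r x)) := by
        gcongr
        exact (measure_mono hsub).trans (measure_biUnion_le _ hcount _)
    _ = ∑' x : u, 5 ^ n * (t * volume (closedBall (x : Rn n) (r x))) := by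
        rw [← ENNReal.tsum_mul_left]
        congr 1 with x
        rw [volume_closedBall_Rn _ (by have := hr0 x; positivity),
          volume_closedBall_Rn _ (hr0 x).le, mul_pow, ENNReal.ofReal_mul (by positivity),
          ENNReal.ofReal_pow (by norm_num), ENNReal.ofReal_ofNat]
        ring
    _ ≤ ∑' x : u, 5 ^ n * ∫⁻ y in closedBall (x : Rn n) (r x), F y := by
        gcongr with x
        exact hr x (huS x.2)
    _ = 5 ^ n * ∫⁻ y in ⋃ x ∈ u, closedBall x (r x), F y := by
        rw [ENNReal.tsum_mul_left, lintegral_biUnion hcount (fun _ _ => measurableSet_closedBall)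
          hdisj]
    _ ≤ _ := by exact mul_le_mul_right (setLIntegral_le_lintegral _ _) _

lemma lintegral_indicator_lt_rpow {σ : ℝ} (hσ : 0 < σ) (a : ℝ≥0∞) :
    ∫⁻ t in Ioi (0 : ℝ), {t : ℝ | ENNReal.ofReal t < a}.indicator
      (fun t => ENNReal.ofReal (σ * t ^ (σ - 1))) t = a ^ σ := by
  have hm : ∀ a : ℝ≥0∞, MeasurableSet {t : ℝ | ENNReal.ofReal t < a} := fun a =>
    measurableSet_lt ENNReal.measurable_ofReal measurable_const
  have key : ∀ c : ℝ, 0 ≤ c → ∫⁻ t in Ioi (0 : ℝ), {t : ℝ | ENNReal.ofReal t < ENNReal.ofReal c}.indicator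
      (fun t => ENNReal.ofReal (σ * t ^ (σ - 1))) t = ENNReal.ofReal c ^ σ := by
    intro c hc
    rw [lintegral_indicator (hm _), Measure.restrict_restrict (hm _)]
    have : {t : ℝ | ENNReal.ofReal t < ENNReal.ofReal c} ∩ Ioi 0 = Ioo 0 c := by
      ext t
      simp only [mem_inter_iff, mem_ofPred_eq, mem_Ioi, mem_Ioo]
      constructor
      · rintro ⟨h1, h2⟩
        exact ⟨h2, (ENNReal.ofReal_lt_ofReal_iff_of_nonneg h2.le).1 h1⟩
      · rintro ⟨h1, h2⟩
        exact ⟨(ENNReal.ofReal_lt_ofReal_iff_of_nonneg h1.le).2 h2, h1⟩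
    rw [this, restrict_Ioo_eq_restrict_Ioc, ← ofReal_integral_eq_lintegral_ofReal,
      ← intervalIntegral.integral_of_le hc, intervalIntegral.integral_const_mul,
      integral_rpow (Or.inl (by linarith)), ENNReal.ofReal_rpow_of_nonneg hc hσ.le]
    · congr 1
      rw [sub_add_cancel, Real.zero_rpow hσ.ne', sub_zero]
      field_simp
    · exact ((intervalIntegral.intervalIntegrable_rpow' (by linarith)).1).const_mul σ
    · filter_upwards [ae_restrict_mem measurableSet_Ioc] with t ht
      have : 0 < t := ht.1
      positivity
  rcases eq_or_ne a ∞ with rfl | ha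
  · rw [ENNReal.top_rpow_of_pos hσ]
    refine ENNReal.eq_top_of_forall_nnreal_le fun N => ?_
    have h := key (N ^ σ⁻¹ : ℝ) (by positivity)
    rw [ENNReal.ofReal_rpow_of_nonneg (by positivity) hσ.le, ← Real.rpow_mul N.coe_nonneg,
      inv_mul_cancel₀ hσ.ne', Real.rpow_one, ENNReal.ofReal_coe_nnreal] at h
    rw [← h]
    refine lintegral_mono fun t => indicator_le_indicator_of_subset ?_ (fun _ => zero_le) t
    intro t _
    exact ENNReal.ofReal_lt_top
  · have h := key a.toReal ENNReal.toReal_nonneg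
    rwa [ENNReal.ofReal_toReal ha] at h

/-- The Hardy–Littlewood maximal theorem. -/
theorem exists_lintegral_maxFn_rpow_le {n : ℕ} (hn : 1 ≤ n) {σ : ℝ} (hσ : 1 < σ) :
    ∃ K : ℝ≥0∞, K ≠ ∞ ∧ ∀ F : Rn n → ℝ≥0∞, Measurable F →
      ∫⁻ x, maxFn F x ^ σ ≤ K * ∫⁻ x, F x ^ σ := by
  set K₁ : ℝ≥0∞ := ENNReal.ofReal (σ / (σ - 1)) * (2 * 5 ^ n)
  refine ⟨K₁ * 2 ^ (σ - 1), by
    refine ENNReal.mul_ne_top (ENNReal.mul_ne_top ENNReal.ofReal_ne_top (by finiteness))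
      (by finiteness), fun F hF => ?_⟩
  have hlevel : ∀ t : ℝ, 0 < t → ENNReal.ofReal t * volume {x | ENNReal.ofReal t < maxFn F x}
      ≤ (2 * 5 ^ n) * ∫⁻ y, {y | ENNReal.ofReal t < 2 * F y}.indicator F y := by
    intro t ht
    have ht2 : ENNReal.ofReal t = 2 * ENNReal.ofReal (t / 2) := by
      rw [← ENNReal.ofReal_ofNat, ← ENNReal.ofReal_mul (by norm_num)]; congr 1; ring
    have hle : F ≤ fun y => {y | ENNReal.ofReal t < 2 * F y}.indicator F y
        + ENNReal.ofReal (t / 2) := by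
      intro y
      by_cases hy : ENNReal.ofReal t < 2 * F y
      · simp only [indicator_of_mem (show y ∈ {y | ENNReal.ofReal t < 2 * F y} from hy)]
        exact le_self_add
      · refine le_trans ?_ le_add_self
        rw [not_lt, ht2] at hy
        exact (ENNReal.mul_le_mul_iff_right two_ne_zero (by norm_num)).1 hy
    have hsub : {x | ENNReal.ofReal t < maxFn F x} ⊆ {x | ENNReal.ofReal (t / 2)
        < maxFn ({y | ENNReal.ofReal t < 2 * F y}.indicator F) x} := by
      intro x hx
      have h1 := lt_of_lt_of_le hx ((maxFn_mono hle x).trans (maxFn_add_const_le _ _ x))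
      refine lt_of_add_lt_add_right (a := ENNReal.ofReal (t / 2)) (lt_of_eq_of_lt ?_ h1)
      rw [← two_mul, ht2]
    have hw := mul_volume_maxFn_gt_le hn ({y | ENNReal.ofReal t < 2 * F y}.indicator F)
      (t := ENNReal.ofReal (t / 2)) (by simpa using ht) ENNReal.ofReal_ne_top
    calc _ ≤ 2 * (ENNReal.ofReal (t / 2) * volume {x | ENNReal.ofReal (t / 2)
        < maxFn ({y | ENNReal.ofReal t < 2 * F y}.indicator F) x}) := by
          rw [← mul_assoc, ← ht2]; gcongr
      _ ≤ _ := by rw [mul_assoc]; gcongr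
  have hmS : MeasurableSet {q : Rn n × ℝ | ENNReal.ofReal q.2 < maxFn F q.1} :=
    measurableSet_lt (by fun_prop) ((measurable_maxFn hF).comp measurable_fst)
  have hmT : MeasurableSet {q : ℝ × Rn n | ENNReal.ofReal q.1 < 2 * F q.2} :=
    measurableSet_lt (by fun_prop) ((hF.comp measurable_snd).const_mul _)
  have hm1 : Measurable fun q : Rn n × ℝ => {q : Rn n × ℝ | ENNReal.ofReal q.2 < maxFn F q.1}.indicator
      (fun q => ENNReal.ofReal (σ * q.2 ^ (σ - 1))) q := by
    refine Measurable.indicator ?_ hmS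
    fun_prop
  have hm2 : Measurable fun q : ℝ × Rn n => ENNReal.ofReal ((σ - 1) * q.1 ^ (σ - 1 - 1)) *
      {q : ℝ × Rn n | ENNReal.ofReal q.1 < 2 * F q.2}.indicator (fun q => F q.2) q := by
    refine Measurable.mul (by fun_prop) ((hF.comp measurable_snd).indicator hmT)
  calc ∫⁻ x, maxFn F x ^ σ
      = ∫⁻ x, ∫⁻ t in Ioi (0 : ℝ), {t : ℝ | ENNReal.ofReal t < maxFn F x}.indicator
          (fun t => ENNReal.ofReal (σ * t ^ (σ - 1))) t := by
        simp only [lintegral_indicator_lt_rpow (zero_lt_one.trans hσ)]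
    _ = ∫⁻ t in Ioi (0 : ℝ), ∫⁻ x, {t : ℝ | ENNReal.ofReal t < maxFn F x}.indicator
          (fun t => ENNReal.ofReal (σ * t ^ (σ - 1))) t := by
        exact lintegral_lintegral_swap hm1.aemeasurable
    _ ≤ ∫⁻ t in Ioi (0 : ℝ), K₁ * ∫⁻ y, ENNReal.ofReal ((σ - 1) * t ^ (σ - 1 - 1)) *
          {y | ENNReal.ofReal t < 2 * F y}.indicator F y := by
        refine setLIntegral_mono' measurableSet_Ioi fun t ht => ?_
        have ht0 : 0 < t := ht
        have e : ∀ x, {t : ℝ | ENNReal.ofReal t < maxFn F x}.indicator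
            (fun t => ENNReal.ofReal (σ * t ^ (σ - 1))) t
            = {x | ENNReal.ofReal t < maxFn F x}.indicator
              (fun _ => ENNReal.ofReal (σ * t ^ (σ - 1))) x := fun x => rfl
        simp only [e]
        rw [lintegral_indicator_const (measurableSet_lt measurable_const (measurable_maxFn hF)),
          lintegral_const_mul' _ _ ENNReal.ofReal_ne_top]
        have e1 : σ * t ^ (σ - 1) = σ / (σ - 1) * ((σ - 1) * t ^ (σ - 1 - 1)) * t := by
          have : σ - 1 ≠ 0 := by linarith
          rw [Real.rpow_sub_one ht0.ne' (σ - 1)]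
          field_simp
        rw [e1, ENNReal.ofReal_mul (mul_nonneg (div_nonneg (by linarith) (by linarith))
          (mul_nonneg (by linarith) (by positivity))), ENNReal.ofReal_mul
          (div_nonneg (by linarith) (by linarith)), mul_assoc _ (ENNReal.ofReal t)]
        refine (mul_le_mul_right (hlevel t ht0) _).trans_eq ?_
        simp only [K₁]
        ring
    _ = K₁ * ∫⁻ y, ∫⁻ t in Ioi (0 : ℝ), ENNReal.ofReal ((σ - 1) * t ^ (σ - 1 - 1)) *
          {y | ENNReal.ofReal t < 2 * F y}.indicator F y := by
        refine (lintegral_const_mul _ hm2.lintegral_prod_right').trans ?_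
        exact congrArg _ (lintegral_lintegral_swap hm2.aemeasurable)
    _ = K₁ * ∫⁻ y, F y * (2 * F y) ^ (σ - 1) := by
        congr 2 with y
        rw [← lintegral_indicator_lt_rpow (sub_pos.2 hσ), ← lintegral_const_mul]
        · congr 1 with t
          simp [indicator, mul_comm]
        · exact Measurable.indicator (by fun_prop)
            (measurableSet_lt (by fun_prop) measurable_const)
    _ = K₁ * 2 ^ (σ - 1) * ∫⁻ x, F x ^ σ := by
        rw [mul_assoc K₁, ← lintegral_const_mul _ (hF.pow_const _)]
        congr 1
        refine lintegral_congr fun y => ?_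
        rw [ENNReal.mul_rpow_of_nonneg _ _ (by linarith), mul_left_comm]
        congr 1
        conv_rhs => rw [show σ = 1 + (σ - 1) by ring]
        rw [ENNReal.rpow_add_of_nonneg _ _ (by norm_num) (by linarith), ENNReal.rpow_one]

end

section

open Metric

lemma ballAvg_mono {n : ℕ} {F G : Rn n → ℝ≥0∞} (x : Rn n) (ρ : ℝ)
    (h : ∀ y ∈ closedBall x ρ, F y ≤ G y) : ballAvg F x ρ ≤ ballAvg G x ρ := by
  unfold ballAvg
  gcongr ?_ / _
  exact setLIntegral_mono' measurableSet_closedBall h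

lemma ballAvg_le_of_le {n : ℕ} {F : Rn n → ℝ≥0∞} {c : ℝ≥0∞} (h : ∀ y, F y ≤ c) (x : Rn n)
    (ρ : ℝ) : ballAvg F x ρ ≤ c := by
  unfold ballAvg
  refine ENNReal.div_le_of_le_mul ?_
  rw [← setLIntegral_const]
  exact lintegral_mono h

lemma ballAvg_const_mul {n : ℕ} (F : Rn n → ℝ≥0∞) {c : ℝ≥0∞} (hc : c ≠ ∞) (x : Rn n)
    (ρ : ℝ) : ballAvg (fun y => c * F y) x ρ = c * ballAvg F x ρ := by
  unfold ballAvg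
  rw [lintegral_const_mul' _ _ hc, mul_div_assoc]

lemma ballAvg_add {n : ℕ} {F : Rn n → ℝ≥0∞} (hF : Measurable F) (G : Rn n → ℝ≥0∞) (x : Rn n)
    (ρ : ℝ) : ballAvg (fun y => F y + G y) x ρ = ballAvg F x ρ + ballAvg G x ρ := by
  unfold ballAvg
  rw [lintegral_add_left hF, ENNReal.add_div]

lemma ballAvg_le_maxFn {n : ℕ} (F : Rn n → ℝ≥0∞) (x : Rn n) (k : ℤ) :
    ballAvg F x (2 ^ k) ≤ maxFn F x := le_iSup (fun k : ℤ => ballAvg F x (2 ^ k)) k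

/-- Jensen's inequality for averages over balls. -/
lemma ballAvg_rpow_le {n : ℕ} {F : Rn n → ℝ≥0∞} (hF : Measurable F) (x : Rn n) {ρ : ℝ}
    (hρ : 0 < ρ) {s : ℝ} (hs : 1 ≤ s) :
    ballAvg F x ρ ^ s ≤ ballAvg (fun y => F y ^ s) x ρ := by
  set μ : Measure (Rn n) := (volume (closedBall x ρ))⁻¹ • volume.restrict (closedBall x ρ)
  have hμ : IsProbabilityMeasure μ := ⟨by
    simp only [μ, Measure.smul_apply, Measure.restrict_apply_univ, smul_eq_mul]
    exact ENNReal.inv_mul_cancel (volume_closedBall_Rn_ne_zero x hρ)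
      (volume_closedBall_Rn_ne_top x ρ)⟩
  have hav : ∀ G : Rn n → ℝ≥0∞, ballAvg G x ρ = ∫⁻ y, G y ∂μ := fun G => by
    rw [lintegral_smul_measure, smul_eq_mul, mul_comm, ballAvg, div_eq_mul_inv]
  have h := eLpNorm'_le_eLpNorm'_of_exponent_le one_pos hs μ hF.aestronglyMeasurable
  simp only [eLpNorm'_eq_lintegral_enorm, enorm_eq_self, ENNReal.rpow_one, div_one] at h
  rw [hav, hav]
  calc (∫⁻ y, F y ∂μ) ^ s ≤ ((∫⁻ y, F y ^ s ∂μ) ^ (1 / s)) ^ s := by gcongr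
    _ = _ := by rw [← ENNReal.rpow_mul, one_div_mul_cancel (by linarith), ENNReal.rpow_one]

lemma ENNReal.rpow_le_exp_mul_rpow_add {a : ℝ≥0∞} (ha : a ≤ 1) {α β c T : ℝ} (hα : 1 ≤ α)
    (h : |α - β| * T ≤ c) :
    a ^ α ≤ ENNReal.ofReal (Real.exp c) * a ^ β + ENNReal.ofReal (Real.exp (-T)) := by
  by_cases haT : a ≤ ENNReal.ofReal (Real.exp (-T))
  · calc a ^ α ≤ a ^ (1 : ℝ) := ENNReal.rpow_le_rpow_of_exponent_ge ha hα
      _ = a := ENNReal.rpow_one a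
      _ ≤ _ := haT.trans le_add_self
  refine le_trans ?_ le_self_add
  push Not at haT
  have hfin : a ≠ ∞ := ne_top_of_le_ne_top ENNReal.one_ne_top ha
  have ha0 : a ≠ 0 := (zero_le.trans_lt haT).ne'
  have hr : 0 < a.toReal := ENNReal.toReal_pos ha0 hfin
  obtain ⟨τ, hτ⟩ : ∃ τ, a.toReal = Real.exp (-τ) := ⟨-Real.log a.toReal, by
    rw [neg_neg, Real.exp_log hr]⟩
  have haτ : a = ENNReal.ofReal (Real.exp (-τ)) := by rw [← hτ, ENNReal.ofReal_toReal hfin]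
  have hτ0 : 0 ≤ τ := by
    rw [haτ, ENNReal.ofReal_le_one, Real.exp_le_one_iff] at ha; linarith
  have hτT : τ ≤ T := by
    rw [haτ, ENNReal.ofReal_lt_ofReal_iff (Real.exp_pos _), Real.exp_lt_exp] at haT; linarith
  rw [haτ, ENNReal.ofReal_rpow_of_pos (Real.exp_pos _), ENNReal.ofReal_rpow_of_pos (Real.exp_pos _),
    ← ENNReal.ofReal_mul (Real.exp_nonneg _), ← Real.exp_mul, ← Real.exp_mul, ← Real.exp_add]
  refine ENNReal.ofReal_le_ofReal (Real.exp_le_exp.2 ?_)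
  have h1 : -(α - β) * τ ≤ |α - β| * T :=
    mul_le_mul (neg_le_abs _) hτT hτ0 (abs_nonneg _)
  linarith

lemma one_le_log_exp_one_add {t : ℝ} (ht : 0 ≤ t) : 1 ≤ Real.log (Real.exp 1 + t) := by
  rw [Real.le_log_iff_exp_le (by positivity)]; linarith

lemma exists_inv_volume_closedBall_le (n : ℕ) : ∃ c : ℝ, 0 ≤ c ∧ ∀ (x : Rn n) (ρ : ℝ), 0 < ρ →
    (volume (closedBall x ρ))⁻¹
      ≤ ENNReal.ofReal (Real.exp (c * Real.log (Real.exp 1 + 1 / ρ))) := by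
  set v := volume (ball (0 : Rn n) 1) with hv
  have hv0 : v ≠ 0 := (measure_ball_pos _ _ one_pos).ne'
  have hvt : v ≠ ∞ := measure_ball_lt_top.ne
  obtain ⟨w, hr, hvw⟩ : ∃ w : ℝ, 0 < w ∧ v = ENNReal.ofReal w :=
    ⟨v.toReal, ENNReal.toReal_pos hv0 hvt, (ENNReal.ofReal_toReal hvt).symm⟩
  refine ⟨|Real.log w| + n, by positivity, fun x ρ hρ => ?_⟩
  rw [ENNReal.inv_le_iff_le_mul (fun _ => volume_closedBall_Rn_ne_zero x hρ)
    (fun h => absurd h (volume_closedBall_Rn_ne_top x ρ)), volume_closedBall_Rn x hρ.le, ← hv,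
    hvw, ← ENNReal.ofReal_mul (by positivity),
    ← ENNReal.ofReal_mul (by positivity), ENNReal.one_le_ofReal]
  have hL := one_le_log_exp_one_add (t := 1 / ρ) (by positivity)
  have h1 : Real.exp (n * Real.log (Real.exp 1 + 1 / ρ)) = (Real.exp 1 + 1 / ρ) ^ n := by
    rw [Real.exp_nat_mul, Real.exp_log (by positivity)]
  have h2 : 1 ≤ ρ ^ n * (Real.exp 1 + 1 / ρ) ^ n := by
    rw [← mul_pow]
    apply one_le_pow₀
    have : ρ * (Real.exp 1 + 1 / ρ) = ρ * Real.exp 1 + 1 := by field_simp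
    rw [this]
    have := Real.exp_pos 1
    nlinarith
  have h3 : 1 ≤ Real.exp (|Real.log w| * Real.log (Real.exp 1 + 1 / ρ)) * w := by
    conv_rhs => rw [← Real.exp_log hr, ← Real.exp_add]
    rw [Real.one_le_exp_iff, Real.log_exp]
    nlinarith [neg_abs_le (Real.log w), abs_nonneg (Real.log w)]
  rw [add_mul, Real.exp_add, h1]
  calc (1 : ℝ) ≤ (ρ ^ n * (Real.exp 1 + 1 / ρ) ^ n) *
        (Real.exp (|Real.log w| * Real.log (Real.exp 1 + 1 / ρ)) * w) :=
        one_le_mul_of_one_le_of_one_le h2 h3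
    _ = _ := by ring

/-- The key estimate for large functions in variable exponent Lebesgue spaces. -/
lemma exists_ballAvg_rpow_le_of_one_le {n : ℕ} {q : Rn n → ℝ} {Q C : ℝ} (hq1 : ∀ x, 1 ≤ q x)
    (hqQ : ∀ x, q x ≤ Q) (hC : 0 < C)
    (hlog : ∀ x y, x ≠ y → |1 / q x - 1 / q y| ≤ C / Real.log (Real.exp 1 + 1 / ‖x - y‖)) :
    ∃ c : ℝ, ∀ f : Rn n → ℝ≥0∞, Measurable f → (∀ y, f y = 0 ∨ 1 ≤ f y) →
      ∫⁻ y, f y ^ q y ≤ 1 → ∀ (x : Rn n) (ρ : ℝ), 0 < ρ →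
        ballAvg f x ρ ^ q x ≤ ENNReal.ofReal (Real.exp c) * ballAvg (fun y => f y ^ q y) x ρ := by
  obtain ⟨c, hc, hvol⟩ := exists_inv_volume_closedBall_le n
  refine ⟨c * (Q * C), fun f hf hf1 hfin x ρ hρ => ?_⟩
  set L := Real.log (Real.exp 1 + 1 / ρ) with hL
  have hL1 : 1 ≤ L := one_le_log_exp_one_add (by positivity)
  have hqx : 0 < q x := by linarith [hq1 x]
  set δ := C / L with hδ
  have hδ0 : 0 < δ := by positivity
  have hd : 0 < 1 / q x + δ := by positivity
  set s := max 1 (1 / (1 / q x + δ)) with hs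
  have hs1 : 1 ≤ s := le_max_left _ _
  have hsq : ∀ y ∈ closedBall x ρ, s ≤ q y := by
    intro y hy
    refine max_le (hq1 y) ?_
    have hqy : 0 < q y := by linarith [hq1 y]
    rw [div_le_iff₀ hd, ← div_le_iff₀' hqy]
    rcases eq_or_ne x y with rfl | hxy
    · linarith
    have h1 := hlog x y hxy
    have h0 : 0 < ‖x - y‖ := norm_pos_iff.2 (sub_ne_zero.2 hxy)
    have h2 : ‖x - y‖ ≤ ρ := by rw [← dist_eq_norm, dist_comm]; exact hy
    have h3 : C / Real.log (Real.exp 1 + 1 / ‖x - y‖) ≤ δ := by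
      rw [hδ, hL]
      gcongr
    linarith [neg_abs_le (1 / q x - 1 / q y)]
  have hsx : s ≤ q x := hsq x (mem_closedBall_self hρ.le)
  have hs0 : 0 < s := by linarith
  set A := ballAvg (fun y => f y ^ q y) x ρ with hA
  have hfA : ballAvg f x ρ ^ s ≤ A := by
    refine (ballAvg_rpow_le hf x hρ hs1).trans (ballAvg_mono x ρ fun y hy => ?_)
    rcases hf1 y with h0 | h1
    · rw [h0, ENNReal.zero_rpow_of_pos hs0]; exact zero_le
    · exact ENNReal.rpow_le_rpow_of_exponent_le h1 (hsq y hy)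
  have hAle : A ≤ ENNReal.ofReal (Real.exp (c * L)) := by
    refine le_trans ?_ (hvol x ρ hρ)
    rw [hA, ballAvg, div_eq_mul_inv]
    exact mul_le_of_le_one_left' ((setLIntegral_le_lintegral _ _).trans hfin)
  have he0 : 0 ≤ q x / s - 1 := by
    rw [sub_nonneg, le_div_iff₀ hs0]; linarith
  have he1 : q x / s - 1 ≤ Q * δ := by
    have h1 : 1 / s ≤ 1 / q x + δ := by
      rw [div_le_iff₀ hs0, ← div_le_iff₀' hd]
      exact le_max_right _ _
    calc q x / s - 1 = q x * (1 / s) - 1 := by ring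
      _ ≤ q x * (1 / q x + δ) - 1 := by gcongr
      _ = q x * δ := by field_simp; ring
      _ ≤ Q * δ := by gcongr; exact hqQ x
  calc ballAvg f x ρ ^ q x = (ballAvg f x ρ ^ s) ^ (q x / s) := by
        rw [← ENNReal.rpow_mul, mul_div_cancel₀ _ hs0.ne']
    _ ≤ A ^ (q x / s) := by gcongr
    _ = A ^ (q x / s - 1) * A := by
        conv_rhs => rw [← ENNReal.rpow_one A, ← ENNReal.rpow_mul, one_mul]
        rw [← ENNReal.rpow_add_of_nonneg _ _ he0 zero_le_one, sub_add_cancel]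
    _ ≤ ENNReal.ofReal (Real.exp (c * L)) ^ (q x / s - 1) * A := by gcongr
    _ ≤ ENNReal.ofReal (Real.exp (c * (Q * C))) * A := by
        gcongr ?_ * _
        rw [ENNReal.ofReal_rpow_of_pos (Real.exp_pos _), ← Real.exp_mul]
        refine ENNReal.ofReal_le_ofReal (Real.exp_le_exp.2 ?_)
        calc c * L * (q x / s - 1) ≤ c * L * (Q * δ) := by gcongr
          _ = c * (Q * C) := by rw [hδ]; field_simp

/-- The integrable tail used in the variable exponent maximal inequality. -/
def logTail (n : ℕ) (x : Rn n) : ℝ≥0∞ := ENNReal.ofReal ((1 + ‖x‖) ^ (-((n : ℝ) + 1)))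

lemma measurable_logTail (n : ℕ) : Measurable (logTail n) := by
  unfold logTail; fun_prop

lemma lintegral_logTail_rpow_ne_top (n : ℕ) {σ : ℝ} (hσ : 1 ≤ σ) :
    ∫⁻ x, logTail n x ^ σ ≠ ∞ := by
  refine ne_top_of_le_ne_top (finite_integral_one_add_norm (E := Rn n) (μ := volume)
    (r := (n : ℝ) + 1) (by rw [finrank_euclideanSpace_fin]; linarith)).ne (lintegral_mono fun x => ?_)
  have h1 : logTail n x ≤ 1 := by
    refine ENNReal.ofReal_le_one.2 (Real.rpow_le_one_of_one_le_of_nonpos ?_ ?_)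
    · linarith [norm_nonneg x]
    · linarith [(n.cast_nonneg : (0 : ℝ) ≤ n)]
  calc logTail n x ^ σ ≤ logTail n x ^ (1 : ℝ) := ENNReal.rpow_le_rpow_of_exponent_ge h1 hσ
    _ = _ := by rw [ENNReal.rpow_one]; rfl

lemma exp_neg_mul_log_le_logTail {n : ℕ} (x : Rn n) :
    ENNReal.ofReal (Real.exp (-((n + 1) * Real.log (Real.exp 1 + ‖x‖)))) ≤ logTail n x := by
  refine ENNReal.ofReal_le_ofReal ?_
  have h0 : 0 < Real.exp 1 + ‖x‖ := by positivity
  rw [← neg_mul, mul_comm, ← Real.rpow_def_of_pos h0]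
  refine Real.rpow_le_rpow_of_nonpos (by positivity) ?_ (by linarith [(n.cast_nonneg : (0 : ℝ) ≤ n)])
  linarith [Real.add_one_le_exp 1]

/-- Pointwise bound for the maximal function with a log-Hölder continuous exponent. -/
theorem exists_maxFn_rpow_le {n : ℕ} {q : Rn n → ℝ} {Q C C' qinf : ℝ} (hq1 : ∀ x, 1 ≤ q x)
    (hqQ : ∀ x, q x ≤ Q) (hC : 0 < C) (hC' : 0 < C')
    (hlog : ∀ x y, x ≠ y → |1 / q x - 1 / q y| ≤ C / Real.log (Real.exp 1 + 1 / ‖x - y‖))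
    (hinf1 : 1 ≤ qinf) (hinfQ : qinf ≤ Q)
    (hinf : ∀ x, |1 / q x - 1 / qinf| ≤ C' / Real.log (Real.exp 1 + ‖x‖)) {σ : ℝ} (hσ : 1 ≤ σ) :
    ∃ K : ℝ≥0∞, K ≠ ∞ ∧ ∀ F : Rn n → ℝ≥0∞, Measurable F → ∫⁻ y, (F y ^ q y) ^ σ ≤ 1 →
      ∀ x, maxFn F x ^ q x ≤ K * (maxFn (fun y => F y ^ q y + logTail n y) x + logTail n x) := by
  obtain ⟨c, hc⟩ := exists_ballAvg_rpow_le_of_one_le hq1 hqQ hC hlog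
  set K₁ := ENNReal.ofReal (Real.exp c) with hK₁
  set d := Q ^ 2 * C' * (n + 1) with hd
  set K₂ := ENNReal.ofReal (Real.exp d) with hK₂
  have hd0 : 0 ≤ d := by positivity
  have hK₂1 : 1 ≤ K₂ := by
    rw [hK₂, ENNReal.one_le_ofReal]; exact Real.one_le_exp hd0
  have hQ : 1 ≤ Q := hinf1.trans hinfQ
  have hexp : ∀ x, |q x - qinf| * ((n + 1) * Real.log (Real.exp 1 + ‖x‖)) ≤ d := by
    intro x
    have hqx : 0 < q x := by linarith [hq1 x]
    have hL := one_le_log_exp_one_add (norm_nonneg x)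
    have h1 : |q x - qinf| = q x * qinf * |1 / q x - 1 / qinf| := by
      have h0 : 0 ≤ q x * qinf := by positivity
      rw [abs_sub_comm]
      have h2 : qinf - q x = q x * qinf * (1 / q x - 1 / qinf) := by field_simp
      rw [h2, abs_mul, abs_of_nonneg h0]
    rw [h1]
    calc q x * qinf * |1 / q x - 1 / qinf| * ((n + 1) * Real.log (Real.exp 1 + ‖x‖))
        ≤ Q * Q * (C' / Real.log (Real.exp 1 + ‖x‖)) *
          ((n + 1) * Real.log (Real.exp 1 + ‖x‖)) := by
          gcongr
          · exact hqQ x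
          · exact hinf x
      _ = d := by rw [hd]; field_simp
  refine ⟨2 ^ (Q - 1) * (K₁ + K₂ * K₂), by
    simp only [hK₁, hK₂]; finiteness, fun F hF hfin x => ?_⟩
  set G : Rn n → ℝ≥0∞ := fun y => F y ^ q y + logTail n y with hG
  have hqx : 0 < q x := by linarith [hq1 x]
  set f₁ : Rn n → ℝ≥0∞ := {y | 1 < F y}.indicator F with hf₁
  set f₂ : Rn n → ℝ≥0∞ := {y | 1 < F y}ᶜ.indicator F with hf₂
  have hms : MeasurableSet {y | 1 < F y} := measurableSet_lt measurable_const hF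
  have hf₁m : Measurable f₁ := hF.indicator hms
  have hf₂m : Measurable f₂ := hF.indicator hms.compl
  have hadd : F = fun y => f₁ y + f₂ y := funext fun y =>
    (congrFun (indicator_self_add_compl {y | 1 < F y} F) y).symm
  have hf₁F : ∀ y, f₁ y ≤ F y := indicator_le_self _ _
  have hf₂F : ∀ y, f₂ y ≤ F y := indicator_le_self _ _
  have hf₁1 : ∀ y, f₁ y = 0 ∨ 1 ≤ f₁ y := by
    intro y
    by_cases hy : 1 < F y
    · right; simp only [hf₁, indicator, mem_ofPred_eq, if_pos hy]; exact hy.le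
    · left; simp only [hf₁, indicator, mem_ofPred_eq, if_neg hy]
  have hf₂1 : ∀ y, f₂ y ≤ 1 := by
    intro y
    by_cases hy : 1 < F y
    · simp [hf₂, hy]
    · exact (hf₂F y).trans (not_lt.1 hy)
  have hfin1 : ∫⁻ y, f₁ y ^ q y ≤ 1 := by
    refine (lintegral_mono fun y => ?_).trans hfin
    have hqy : 0 < q y := by linarith [hq1 y]
    rcases hf₁1 y with h | h
    · rw [h, ENNReal.zero_rpow_of_pos hqy]; exact zero_le
    · calc f₁ y ^ q y = (f₁ y ^ q y) ^ (1 : ℝ) := by rw [ENNReal.rpow_one]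
        _ ≤ (f₁ y ^ q y) ^ σ := ENNReal.rpow_le_rpow_of_exponent_le
            (ENNReal.one_le_rpow h hqy) hσ
        _ ≤ _ := by gcongr; exact hf₁F y
  have b₁ : ∀ k : ℤ, ballAvg f₁ x (2 ^ k) ^ q x ≤ K₁ * maxFn G x := by
    intro k
    refine (hc f₁ hf₁m hf₁1 hfin1 x _ (by positivity)).trans ?_
    gcongr
    refine le_trans (ballAvg_mono x _ fun y _ => ?_) (ballAvg_le_maxFn G x k)
    exact le_trans (by gcongr; exacts [by linarith [hq1 y], hf₁F y]) le_self_add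
  have b₂ : ∀ k : ℤ, ballAvg f₂ x (2 ^ k) ^ q x ≤ K₂ * K₂ * maxFn G x + logTail n x := by
    intro k
    set a := ballAvg f₂ x (2 ^ k)
    have e1 : a ^ q x ≤ K₂ * a ^ qinf + logTail n x :=
      (ENNReal.rpow_le_exp_mul_rpow_add (ballAvg_le_of_le hf₂1 x _) (hq1 x) (hexp x)).trans
        (add_le_add_right (exp_neg_mul_log_le_logTail x) _)
    have e2 : ∀ y, f₂ y ^ qinf ≤ K₂ * G y := by
      intro y
      have h := ENNReal.rpow_le_exp_mul_rpow_add (hf₂1 y) hinf1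
        ((abs_sub_comm qinf (q y)).symm ▸ hexp y)
      refine h.trans ?_
      rw [hG, mul_add]
      refine add_le_add ?_ ((exp_neg_mul_log_le_logTail y).trans (le_mul_of_one_le_left' hK₂1))
      gcongr
      · linarith [hq1 y]
      · exact hf₂F y
    have e3 : a ^ qinf ≤ K₂ * maxFn G x := by
      refine (ballAvg_rpow_le hf₂m x (by positivity) hinf1).trans ?_
      refine (ballAvg_mono x _ fun y _ => e2 y).trans ?_
      rw [ballAvg_const_mul _ ENNReal.ofReal_ne_top]
      gcongr
      exact ballAvg_le_maxFn G x k
    refine e1.trans ?_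
    rw [mul_assoc]
    gcongr
  have key : ∀ k : ℤ, ballAvg F x (2 ^ k) ≤
      (2 ^ (Q - 1) * (K₁ + K₂ * K₂) * (maxFn G x + logTail n x)) ^ (1 / q x) := by
    intro k
    rw [one_div, ENNReal.le_rpow_inv_iff hqx]
    calc ballAvg F x (2 ^ k) ^ q x
        = (ballAvg f₁ x (2 ^ k) + ballAvg f₂ x (2 ^ k)) ^ q x := by
          rw [← ballAvg_add hf₁m, ← hadd]
      _ ≤ 2 ^ (q x - 1) * (ballAvg f₁ x (2 ^ k) ^ q x + ballAvg f₂ x (2 ^ k) ^ q x) :=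
          ENNReal.rpow_add_le_mul_rpow_add_rpow _ _ (hq1 x)
      _ ≤ 2 ^ (Q - 1) * (K₁ * maxFn G x + (K₂ * K₂ * maxFn G x + logTail n x)) := by
          gcongr
          · norm_num
          · exact hqQ x
          · exact b₁ k
          · exact b₂ k
      _ ≤ 2 ^ (Q - 1) * (K₁ * (maxFn G x + logTail n x)
            + (K₂ * K₂ * maxFn G x + K₂ * K₂ * logTail n x)) := by
          gcongr
          · exact le_self_add
          · exact le_mul_of_one_le_left' (one_le_mul_of_one_le_of_one_le hK₂1 hK₂1)
      _ = _ := by ring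
  rw [← ENNReal.le_rpow_inv_iff hqx, ← one_div]
  exact iSup_le key

/-- The maximal function is bounded on variable exponent Lebesgue spaces (modular form). -/
theorem exists_lintegral_maxFn_rpow_var_le {n : ℕ} (hn : 1 ≤ n) {q : Rn n → ℝ} {Q C C' qinf : ℝ}
    (hq1 : ∀ x, 1 ≤ q x) (hqQ : ∀ x, q x ≤ Q) (hqm : Measurable q) (hC : 0 < C) (hC' : 0 < C')
    (hlog : ∀ x y, x ≠ y → |1 / q x - 1 / q y| ≤ C / Real.log (Real.exp 1 + 1 / ‖x - y‖))
    (hinf1 : 1 ≤ qinf) (hinfQ : qinf ≤ Q)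
    (hinf : ∀ x, |1 / q x - 1 / qinf| ≤ C' / Real.log (Real.exp 1 + ‖x‖)) {σ : ℝ} (hσ : 1 < σ) :
    ∃ K : ℝ≥0∞, K ≠ ∞ ∧ ∀ F : Rn n → ℝ≥0∞, Measurable F → ∫⁻ y, F y ^ (σ * q y) ≤ 1 →
      ∫⁻ x, maxFn F x ^ (σ * q x) ≤ K := by
  obtain ⟨K, hK, hpt⟩ := exists_maxFn_rpow_le hq1 hqQ hC hC' hlog hinf1 hinfQ hinf hσ.le
  obtain ⟨K', hK', hmax⟩ := exists_lintegral_maxFn_rpow_le hn hσ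
  set T := ∫⁻ x, logTail n x ^ σ with hT
  have hTf : T ≠ ∞ := lintegral_logTail_rpow_ne_top n hσ.le
  have hσ0 : 0 ≤ σ := by linarith
  have hσ1 : 0 ≤ σ - 1 := by linarith
  refine ⟨K ^ σ * (2 ^ (σ - 1) * (K' * (2 ^ (σ - 1) * (1 + T)) + T)), by finiteness,
    fun F hF hfin => ?_⟩
  have hfin' : ∫⁻ y, (F y ^ q y) ^ σ ≤ 1 := by
    simpa only [← ENNReal.rpow_mul, mul_comm] using hfin
  have hFq : Measurable fun y => F y ^ q y := hF.pow hqm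
  have hlt := measurable_logTail n
  have hGm : Measurable fun y => F y ^ q y + logTail n y := hFq.add hlt
  calc ∫⁻ x, maxFn F x ^ (σ * q x)
      ≤ ∫⁻ x, K ^ σ * (2 ^ (σ - 1) * (maxFn (fun y => F y ^ q y + logTail n y) x ^ σ
          + logTail n x ^ σ)) := by
        refine lintegral_mono fun x => ?_
        rw [mul_comm σ, ENNReal.rpow_mul]
        calc _ ≤ (K * (maxFn (fun y => F y ^ q y + logTail n y) x + logTail n x)) ^ σ := by
              gcongr; exact hpt F hF hfin' x
          _ ≤ _ := by
              rw [ENNReal.mul_rpow_of_nonneg _ _ hσ0]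
              gcongr
              exact ENNReal.rpow_add_le_mul_rpow_add_rpow _ _ hσ.le
    _ = K ^ σ * (2 ^ (σ - 1) * ((∫⁻ x, maxFn (fun y => F y ^ q y + logTail n y) x ^ σ) + T)) := by
        rw [lintegral_const_mul' _ _ (by finiteness), lintegral_const_mul' _ _ (by finiteness),
          lintegral_add_right _ (hlt.pow_const _)]
    _ ≤ K ^ σ * (2 ^ (σ - 1) * (K' * (∫⁻ x, (F x ^ q x + logTail n x) ^ σ) + T)) := by
        gcongr
        exact hmax _ hGm
    _ ≤ K ^ σ * (2 ^ (σ - 1) * (K' * (∫⁻ x, 2 ^ (σ - 1) *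
          ((F x ^ q x) ^ σ + logTail n x ^ σ)) + T)) := by
        gcongr with x
        exact ENNReal.rpow_add_le_mul_rpow_add_rpow _ _ hσ.le
    _ = K ^ σ * (2 ^ (σ - 1) * (K' * (2 ^ (σ - 1) * ((∫⁻ x, (F x ^ q x) ^ σ) + T)) + T)) := by
        rw [lintegral_const_mul' _ _ (by finiteness), lintegral_add_right _ (hlt.pow_const _)]
    _ ≤ _ := by gcongr

end

section

open Metric Filter Topology

lemma lintegral_rieszKer_mul_eq {n : ℕ} (γ : ℝ) {F : Rn n → ℝ≥0∞} (hF : Measurable F) (x : Rn n) :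
    ∫⁻ y, rieszKer n γ (x - y) * F y
      = ∫⁻ ρ in Ioi (0 : ℝ), ENNReal.ofReal (ρ ^ (γ - n - 1)) * ∫⁻ y in ball x ρ, F y := by
  set w : ℝ → ℝ≥0∞ := fun ρ => ENNReal.ofReal (ρ ^ (γ - n - 1)) with hw
  have hwm : Measurable w := by fun_prop
  have hS : MeasurableSet {r : Rn n × ℝ | ‖x - r.1‖ < r.2} :=
    measurableSet_lt (by fun_prop) (by fun_prop)
  have hm : Measurable fun r : Rn n × ℝ =>
      {r : Rn n × ℝ | ‖x - r.1‖ < r.2}.indicator (fun r => w r.2 * F r.1) r :=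
    ((hwm.comp measurable_snd).mul (hF.comp measurable_fst)).indicator hS
  calc ∫⁻ y, rieszKer n γ (x - y) * F y
      = ∫⁻ y, ∫⁻ ρ in Ioi (0 : ℝ),
          {r : Rn n × ℝ | ‖x - r.1‖ < r.2}.indicator (fun r => w r.2 * F r.1) (y, ρ) := by
        refine lintegral_congr fun y => ?_
        rw [rieszKer, ← lintegral_mul_const _ hwm]
        have e : ∀ ρ, {r : Rn n × ℝ | ‖x - r.1‖ < r.2}.indicator (fun r => w r.2 * F r.1) (y, ρ)
            = (Ioi ‖x - y‖).indicator (fun ρ => w ρ * F y) ρ := fun ρ => rfl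
        simp only [e]
        rw [lintegral_indicator measurableSet_Ioi, Measure.restrict_restrict measurableSet_Ioi,
          inter_eq_left.2 (Ioi_subset_Ioi (norm_nonneg _))]
    _ = ∫⁻ ρ in Ioi (0 : ℝ), ∫⁻ y,
          {r : Rn n × ℝ | ‖x - r.1‖ < r.2}.indicator (fun r => w r.2 * F r.1) (y, ρ) :=
        lintegral_lintegral_swap hm.aemeasurable
    _ = _ := by
        refine lintegral_congr fun ρ => ?_
        rw [← lintegral_const_mul _ hF, ← lintegral_indicator measurableSet_ball]
        refine lintegral_congr fun y => ?_
        have : y ∈ ball x ρ ↔ ‖x - y‖ < ρ := by rw [mem_ball', dist_eq_norm]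
        by_cases h : ‖x - y‖ < ρ
        · rw [indicator_of_mem (this.2 h)]
          simp [indicator, h, hw]
        · rw [indicator_of_notMem (fun h' => h (this.1 h'))]
          simp [indicator, h]

lemma setLIntegral_closedBall_le_of_lintegral_rpow_le {n : ℕ} {F : Rn n → ℝ≥0∞} (hF : Measurable F)
    {q : ℝ} (hq : 1 ≤ q) (hfin : ∫⁻ y, F y ^ q ≤ 1) (x : Rn n) {ρ : ℝ} (hρ : 0 < ρ) :
    ∫⁻ y in closedBall x ρ, F y ≤ volume (closedBall x ρ) ^ (1 - 1 / q) := by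
  have h0 := volume_closedBall_Rn_ne_zero x hρ
  have ht := volume_closedBall_Rn_ne_top x ρ
  have hq0 : 0 < q := by linarith
  have h1 : ballAvg F x ρ ≤ (volume (closedBall x ρ)) ^ (-(1 / q)) := by
    rw [ENNReal.rpow_neg, ← ENNReal.inv_rpow, one_div, ENNReal.le_rpow_inv_iff hq0]
    refine (ballAvg_rpow_le hF x hρ hq).trans ?_
    rw [ballAvg, div_eq_mul_inv]
    exact mul_le_of_le_one_left' ((setLIntegral_le_lintegral _ _).trans hfin)
  rw [setLIntegral_closedBall_eq F x hρ, sub_eq_add_neg, ENNReal.rpow_add _ _ h0 ht,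
    ENNReal.rpow_one]
  gcongr

lemma setLIntegral_Ioo_rpow_sub_one {γ R : ℝ} (hγ : 0 < γ) (hR : 0 < R) :
    ∫⁻ ρ in Ioc 0 R, ENNReal.ofReal (ρ ^ (γ - 1)) = ENNReal.ofReal (R ^ γ / γ) := by
  rw [← ofReal_integral_eq_lintegral_ofReal, ← intervalIntegral.integral_of_le hR.le,
    integral_rpow (Or.inl (by linarith))]
  · congr 1
    rw [sub_add_cancel, Real.zero_rpow hγ.ne', sub_zero]
  · exact (intervalIntegral.intervalIntegrable_rpow' (by linarith)).1
  · filter_upwards [ae_restrict_mem measurableSet_Ioc] with t ht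
    have : 0 < t := ht.1
    positivity

lemma setLIntegral_Ioi_rpow_sub_one {κ R : ℝ} (hκ : 0 < κ) (hR : 0 < R) :
    ∫⁻ ρ in Ioi R, ENNReal.ofReal (ρ ^ (-κ - 1)) = ENNReal.ofReal (R ^ (-κ) / κ) := by
  rw [← ofReal_integral_eq_lintegral_ofReal (integrableOn_Ioi_rpow_of_lt (by linarith) hR),
    integral_Ioi_rpow_of_lt (by linarith) hR]
  · congr 1
    rw [sub_add_cancel, neg_div_neg_eq]
  · filter_upwards [ae_restrict_mem measurableSet_Ioi] with l hl
    have : 0 < l := hR.trans hl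
    positivity

/-- Hedberg's inequality: a Riesz potential is dominated by a power of the maximal function. -/
theorem exists_lintegral_rieszKer_mul_le {n : ℕ} {γ q : ℝ} (hγ : 0 < γ) (hq : 1 < q)
    (hγq : γ < n / q) : ∃ K : ℝ≥0∞, K ≠ 0 ∧ K ≠ ∞ ∧ ∀ F : Rn n → ℝ≥0∞, Measurable F →
      ∫⁻ y, F y ^ q ≤ 1 → ∀ x,
        ∫⁻ y, rieszKer n γ (x - y) * F y ≤ K * maxFn F x ^ (1 - γ / (n / q)) := by
  set v := volume (ball (0 : Rn n) 1) with hv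
  have hvt : v ≠ ∞ := measure_ball_lt_top.ne
  set θ : ℝ := n / q with hθ
  have hθ0 : 0 < θ := hγ.trans hγq
  have hq0 : 0 < q := by linarith
  have hq1 : 0 ≤ 1 - 1 / q := by
    rw [sub_nonneg, div_le_one hq0]; exact hq.le
  have he0 : 0 < 1 - γ / θ := by
    rw [sub_pos, div_lt_one hθ0]; exact hγq
  set K₁ : ℝ≥0∞ := 2 ^ n * v * ENNReal.ofReal (1 / γ) with hK₁
  set K₂ : ℝ≥0∞ := v ^ (1 - 1 / q) * ENNReal.ofReal (1 / (θ - γ)) with hK₂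
  refine ⟨1 + (K₁ + K₂), by simp, by simp only [hK₁, hK₂]; finiteness, fun F hF hfin x => ?_⟩
  set m := maxFn F x with hm
  rw [lintegral_rieszKer_mul_eq γ hF x]
  have hA : ∀ ρ ∈ Ioi (0 : ℝ), ENNReal.ofReal (ρ ^ (γ - n - 1)) * ∫⁻ y in ball x ρ, F y
      ≤ (2 ^ n * v * m) * ENNReal.ofReal (ρ ^ (γ - 1)) := by
    intro ρ hρ
    have hρ0 : 0 < ρ := hρ
    calc _ ≤ ENNReal.ofReal (ρ ^ (γ - n - 1)) * (volume (closedBall x (2 * ρ)) * m) := by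
          gcongr
          exact (lintegral_mono_set ball_subset_closedBall).trans
            (setLIntegral_closedBall_le_maxFn F x hρ0)
      _ = (2 ^ n * v * m) * (ENNReal.ofReal (ρ ^ (γ - n - 1)) * ENNReal.ofReal (ρ ^ n)) := by
          rw [volume_closedBall_Rn x (by positivity), mul_pow, ENNReal.ofReal_mul (by positivity),
            ENNReal.ofReal_pow (by norm_num), ENNReal.ofReal_ofNat]
          ring
      _ = _ := by
          rw [← ENNReal.ofReal_mul (by positivity), ← Real.rpow_natCast ρ n, ← Real.rpow_add hρ0]
          congr 3; ring
  have hB : ∀ ρ ∈ Ioi (0 : ℝ), ENNReal.ofReal (ρ ^ (γ - n - 1)) * ∫⁻ y in ball x ρ, F y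
      ≤ v ^ (1 - 1 / q) * ENNReal.ofReal (ρ ^ (-(θ - γ) - 1)) := by
    intro ρ hρ
    have hρ0 : 0 < ρ := hρ
    calc _ ≤ ENNReal.ofReal (ρ ^ (γ - n - 1)) * volume (closedBall x ρ) ^ (1 - 1 / q) := by
          gcongr
          exact (lintegral_mono_set ball_subset_closedBall).trans
            (setLIntegral_closedBall_le_of_lintegral_rpow_le hF hq.le hfin x hρ0)
      _ = v ^ (1 - 1 / q) *
            (ENNReal.ofReal (ρ ^ (γ - n - 1)) * ENNReal.ofReal ((ρ ^ n) ^ (1 - 1 / q))) := by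
          rw [volume_closedBall_Rn x hρ0.le, ENNReal.mul_rpow_of_nonneg _ _ hq1,
            ENNReal.ofReal_rpow_of_nonneg (by positivity) hq1]
          ring
      _ = _ := by
          rw [← ENNReal.ofReal_mul (by positivity), ← Real.rpow_natCast ρ n,
            ← Real.rpow_mul hρ0.le, ← Real.rpow_add hρ0]
          congr 3
          rw [hθ]; ring
  rcases eq_or_ne m ∞ with hmt | hmt
  · rw [hmt, ENNReal.top_rpow_of_pos he0, ENNReal.mul_top (by simp)]
    exact le_top
  rcases eq_or_ne m 0 with hm0 | hm0
  · refine le_trans (le_of_eq ?_) zero_le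
    rw [setLIntegral_congr_fun measurableSet_Ioi (g := fun _ => 0), lintegral_zero]
    intro ρ hρ
    have := hA ρ hρ
    rwa [hm0, mul_zero, zero_mul, nonpos_iff_eq_zero] at this
  obtain ⟨r, hr0, hmr⟩ : ∃ r : ℝ, 0 < r ∧ m = ENNReal.ofReal r :=
    ⟨m.toReal, ENNReal.toReal_pos hm0 hmt, (ENNReal.ofReal_toReal hmt).symm⟩
  set R := r ^ (-(1 / θ)) with hR
  have hR0 : 0 < R := by positivity
  have hθγ : 0 < θ - γ := sub_pos.2 hγq
  have e1 : r * R ^ γ = r ^ (1 - γ / θ) := by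
    rw [hR, ← Real.rpow_mul hr0.le]
    nth_rw 1 [← Real.rpow_one r]
    rw [← Real.rpow_add hr0]
    congr 1; ring
  have e2 : R ^ (-(θ - γ)) = r ^ (1 - γ / θ) := by
    rw [hR, ← Real.rpow_mul hr0.le]
    congr 1; field_simp
  have e3 : m ^ (1 - γ / θ) = ENNReal.ofReal (r ^ (1 - γ / θ)) := by
    rw [hmr, ENNReal.ofReal_rpow_of_pos hr0]
  have i1 : ∫⁻ ρ in Ioc 0 R, ENNReal.ofReal (ρ ^ (γ - n - 1)) * ∫⁻ y in ball x ρ, F y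
      ≤ K₁ * m ^ (1 - γ / θ) := by
    refine (setLIntegral_mono' measurableSet_Ioc fun ρ hρ => hA ρ hρ.1).trans (le_of_eq ?_)
    rw [lintegral_const_mul _ (by fun_prop), setLIntegral_Ioo_rpow_sub_one hγ hR0, e3, hmr, hK₁,
      mul_assoc, ← ENNReal.ofReal_mul hr0.le, mul_assoc _ (ENNReal.ofReal (1 / γ)),
      ← ENNReal.ofReal_mul (by positivity), ← e1]
    congr 2; ring
  have i2 : ∫⁻ ρ in Ioi R, ENNReal.ofReal (ρ ^ (γ - n - 1)) * ∫⁻ y in ball x ρ, F y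
      ≤ K₂ * m ^ (1 - γ / θ) := by
    refine (setLIntegral_mono' measurableSet_Ioi fun ρ hρ => hB ρ (hR0.trans hρ)).trans
      (le_of_eq ?_)
    rw [lintegral_const_mul _ (by fun_prop), setLIntegral_Ioi_rpow_sub_one hθγ hR0, e3, hK₂,
      mul_assoc, ← ENNReal.ofReal_mul (by positivity), e2]
    congr 2; ring
  rw [← Ioc_union_Ioi_eq_Ioi hR0.le]
  calc _ ≤ _ := lintegral_union_le _ _ _
    _ ≤ K₁ * m ^ (1 - γ / θ) + K₂ * m ^ (1 - γ / θ) := add_le_add i1 i2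
    _ = (K₁ + K₂) * m ^ (1 - γ / θ) := by ring
    _ ≤ (1 + (K₁ + K₂)) * m ^ (1 - γ / θ) := mul_le_mul_left le_add_self _

lemma lintegral_div_rpow_le_one {n : ℕ} {p : Rn n → ℝ} (hp : ∀ x, 1 ≤ p x) {J H : Rn n → ℝ≥0∞}
    {K K' D : ℝ≥0∞} (hK0 : K ≠ 0) (hK : K ≠ ∞) (hK' : K' ≠ ∞) (hJ : ∀ x, J x ≤ K * H x)
    (hH : ∫⁻ x, H x ^ p x ≤ K') (hD : K * (1 + K') ≤ D) :
    ∫⁻ x, (J x / D) ^ p x ≤ 1 := by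
  have h1 : 1 + K' ≠ 0 := by simp
  have h2 : 1 + K' ≠ ∞ := by finiteness
  calc ∫⁻ x, (J x / D) ^ p x ≤ ∫⁻ x, (1 + K')⁻¹ * H x ^ p x := by
        refine lintegral_mono fun x => ?_
        have hpx : 0 ≤ p x := by linarith [hp x]
        calc (J x / D) ^ p x ≤ (K * H x / (K * (1 + K'))) ^ p x := by
              gcongr; exact hJ x
          _ = ((1 + K')⁻¹ * H x) ^ p x := by
              congr 1
              rw [ENNReal.mul_div_mul_left _ _ hK0 hK, div_eq_mul_inv, mul_comm]
          _ = (1 + K')⁻¹ ^ p x * H x ^ p x := ENNReal.mul_rpow_of_nonneg _ _ hpx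
          _ ≤ (1 + K')⁻¹ ^ (1 : ℝ) * H x ^ p x := by
              refine mul_le_mul_left (ENNReal.rpow_le_rpow_of_exponent_ge ?_ (hp x)) _
              exact ENNReal.inv_le_one.2 le_self_add
          _ = _ := by rw [ENNReal.rpow_one]
    _ = (1 + K')⁻¹ * ∫⁻ x, H x ^ p x := lintegral_const_mul' _ _ (by simp)
    _ ≤ (1 + K')⁻¹ * (1 + K') := by gcongr; exact hH.trans le_add_self
    _ = 1 := ENNReal.inv_mul_cancel h1 h2

lemma continuous_of_logHolder {n : ℕ} {p : Rn n → ℝ} (hp : ∀ x, 1 ≤ p x) {C : ℝ}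
    (hlog : ∀ x y, x ≠ y → |1 / p x - 1 / p y| ≤ C / Real.log (Real.exp 1 + 1 / ‖x - y‖)) :
    Continuous p := by
  have hc : Continuous fun x => 1 / p x := by
    refine continuous_iff_continuousAt.2 fun x => ?_
    rw [ContinuousAt, tendsto_iff_dist_tendsto_zero]
    have h1 : Tendsto (fun y => C / Real.log (Real.exp 1 + 1 / ‖y - x‖)) (𝓝[≠] x) (𝓝 0) := by
      refine Tendsto.const_div_atTop (Real.tendsto_log_atTop.comp
        (tendsto_atTop_add_const_left _ _ ?_)) C
      simp only [one_div]
      refine Tendsto.inv_tendsto_nhdsGT_zero ?_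
      exact tendsto_norm_sub_self_nhdsNE x
    have h2 : Tendsto (fun y => dist (1 / p y) (1 / p x)) (𝓝[≠] x) (𝓝 0) := by
      refine squeeze_zero' (.of_forall fun _ => dist_nonneg) ?_ h1
      filter_upwards [self_mem_nhdsWithin] with y hy
      exact hlog y x hy
    rw [← nhdsNE_sup_pure]
    refine h2.sup ?_
    rw [tendsto_pure_left]
    intro s hs
    simpa using mem_of_mem_nhds hs
  have : p = fun x => (1 / p x)⁻¹ := by funext x; simp
  rw [this]
  exact hc.inv₀ fun x => by have := hp x; positivity

/-- The maximal inequality for the exponent `p(·)/β`. -/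
theorem exists_lintegral_maxFn_rpow_div_le {n : ℕ} (hn : 1 ≤ n) {p : Rn n → ℝ}
    (hplog : IsPLog univ p) {pm P β : ℝ} (hβ : 1 ≤ β) (hβpm : β < pm) (hpm : ∀ x, pm ≤ p x)
    (hP : ∀ x, p x ≤ P) :
    ∃ K : ℝ≥0∞, K ≠ ∞ ∧ ∀ F : Rn n → ℝ≥0∞, Measurable F → ∫⁻ y, F y ^ (p y / β) ≤ 1 →
      ∫⁻ x, maxFn F x ^ (p x / β) ≤ K := by
  obtain ⟨hmeas, hp1, C₁, hC₁, C₂, hC₂, pinf, hlog, hinf⟩ := hplog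
  have hpm0 : 0 < pm := by linarith
  have hp0 : ∀ x, 0 < p x := fun x => hpm0.trans_le (hpm x)
  have hP0 : 0 < P := (hp0 0).trans_le (hP 0)
  have hlim : ∀ ε > 0, ∃ x : Rn n, |1 / p x - 1 / pinf| ≤ ε := by
    intro ε hε
    refine ⟨EuclideanSpace.single ⟨0, hn⟩ (Real.exp (C₂ / ε)), (hinf _ (mem_univ _)).trans ?_⟩
    rw [PiLp.norm_single, Real.norm_of_nonneg (Real.exp_nonneg _)]
    have h1 : C₂ / ε ≤ Real.log (Real.exp 1 + Real.exp (C₂ / ε)) := by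
      rw [Real.le_log_iff_exp_le (by positivity)]
      linarith [Real.exp_pos 1]
    rw [div_le_iff₀ (lt_of_lt_of_le (by positivity) h1), ← div_le_iff₀' hε]
    exact h1
  have hl : 1 / P ≤ 1 / pinf := by
    refine le_of_forall_pos_le_add fun ε hε => ?_
    obtain ⟨x, hx⟩ := hlim ε hε
    have := one_div_le_one_div_of_le (hp0 x) (hP x)
    linarith [(abs_le.1 hx).2]
  have hu : 1 / pinf ≤ 1 / pm := by
    refine le_of_forall_pos_le_add fun ε hε => ?_
    obtain ⟨x, hx⟩ := hlim ε hε
    have := one_div_le_one_div_of_le hpm0 (hpm x)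
    linarith [(abs_le.1 hx).1]
  have hpinf0 : 0 < pinf := one_div_pos.1 (lt_of_lt_of_le (by positivity) hl)
  have hl' : pinf ≤ P := (one_div_le_one_div hP0 hpinf0).1 hl
  have hu' : pm ≤ pinf := (one_div_le_one_div hpinf0 hpm0).1 hu
  have hscale : ∀ s t : ℝ, |1 / (s / pm) - 1 / (t / pm)| = pm * |1 / s - 1 / t| := by
    intro s t
    rw [← abs_of_pos hpm0, ← abs_mul, abs_of_pos hpm0, one_div_div, one_div_div]
    congr 1; ring
  obtain ⟨K, hK, h⟩ := exists_lintegral_maxFn_rpow_var_le hn (q := fun x => p x / pm) (Q := P / pm)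
    (C := pm * C₁) (C' := pm * C₂) (qinf := pinf / pm)
    (fun x => (one_le_div hpm0).2 (hpm x)) (fun x => by have := hP x; gcongr)
    (hmeas.div_const _) (by positivity) (by positivity)
    (fun x y hxy => by
      rw [hscale, mul_div_assoc]
      exact mul_le_mul_of_nonneg_left (hlog x (mem_univ _) y (mem_univ _) hxy) hpm0.le)
    ((one_le_div hpm0).2 hu') (by gcongr)
    (fun x => by
      rw [hscale, mul_div_assoc]
      exact mul_le_mul_of_nonneg_left (hinf x (mem_univ _)) hpm0.le)
    (σ := pm / β) ((one_lt_div (by linarith)).2 hβpm)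
  have e : ∀ x, pm / β * (p x / pm) = p x / β := fun x => by field_simp
  simp only [e] at h
  exact ⟨K, hK, h⟩

end

section

lemma forall_le_of_ae_le {n : ℕ} {f g : Rn n → ℝ} (hf : Continuous f) (hg : Continuous g)
    (h : ∀ᵐ x ∂(volume : Measure (Rn n)), f x ≤ g x) (x : Rn n) : f x ≤ g x := by
  have hd : Dense {x | f x ≤ g x} := Measure.dense_of_ae h
  have hc : IsClosed {x | f x ≤ g x} := isClosed_le hf hg
  have : x ∈ {x | f x ≤ g x} := by
    rw [← hc.closure_eq]; exact hd x
  exact this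

lemma luxNorm_le {Ω : Type*} [MeasurableSpace Ω] {μ : Measure Ω} {p : Ω → ℝ} {f : Ω → ℝ≥0∞}
    {D : ℝ≥0∞} (hD : D ≠ 0) (h : ∫⁻ x, (f x / D) ^ p x ∂μ ≤ 1) : luxNorm μ p f ≤ D :=
  sInf_le ⟨pos_iff_ne_zero.2 hD, h⟩

lemma lintegral_div_rpow_le_one_of_luxNorm_lt {Ω : Type*} [MeasurableSpace Ω] {μ : Measure Ω}
    {p : Ω → ℝ} (hp : ∀ x, 0 ≤ p x) {f : Ω → ℝ≥0∞} {D : ℝ≥0∞} (h : luxNorm μ p f < D) :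
    ∫⁻ x, (f x / D) ^ p x ∂μ ≤ 1 := by
  obtain ⟨l, ⟨-, hl⟩, hlD⟩ := sInf_lt_iff.1 h
  refine (lintegral_mono fun x => ?_).trans hl
  exact ENNReal.rpow_le_rpow (ENNReal.div_le_div_left hlD.le _) (hp x)

lemma measurable_timeSup {n : ℕ} {u : ℝ → Rn n → ℝ} (hu : Measurable (Function.uncurry u)) :
    Measurable (timeSup n u) := by
  refine measurable_of_Iic fun a => ?_
  have hm : Measurable fun z : Rn n × ℝ => ENNReal.ofReal |u z.2 z.1| :=
    (hu.comp measurable_swap).abs.ennreal_ofReal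
  have hS : MeasurableSet {z : Rn n × ℝ | a < ENNReal.ofReal |u z.2 z.1|} :=
    measurableSet_lt measurable_const hm
  have h := measurable_measure_prodMk_left (ν := (volume : Measure ℝ).restrict (Ioi 0)) hS
  have e : timeSup n u ⁻¹' Iic a = (fun x => (volume : Measure ℝ).restrict (Ioi 0)
      (Prod.mk x ⁻¹' {z : Rn n × ℝ | a < ENNReal.ofReal |u z.2 z.1|})) ⁻¹' {0} := by
    ext x
    have : (volume : Measure ℝ).restrict (Ioi 0)
        (Prod.mk x ⁻¹' {z : Rn n × ℝ | a < ENNReal.ofReal |u z.2 z.1|}) = 0 ↔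
        ∀ᵐ t ∂(volume : Measure ℝ).restrict (Ioi 0), ENNReal.ofReal |u t x| ≤ a := by
      rw [ae_iff]
      simp only [not_le]
      rfl
    simp only [mem_preimage, mem_Iic, mem_singleton_iff] at this ⊢
    rw [this]
    refine ⟨fun h => ?_, fun h => essSup_le_of_ae_le a h⟩
    filter_upwards [ENNReal.ae_le_essSup
      (μ := (volume : Measure ℝ).restrict (Ioi 0)) fun t => ENNReal.ofReal |u t x|] with t ht
    exact ht.trans h
  rw [e]
  exact h (measurableSet_singleton 0)

/-- Modular estimate, for a normalized datum, of a function dominated by a Riesz potential of the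
`(b + 1)`-st power of the datum. -/
theorem exists_lintegral_riesz_pow_le {n b : ℕ} (hn : 1 ≤ n) (hb : 1 ≤ b) {γ : ℝ} (hγ : 0 < γ)
    (hnb : γ * ((b : ℝ) + 1) < n * b) {p : Rn n → ℝ} (hplog : IsPLog univ p) {pm P : ℝ}
    (hbpm : (b : ℝ) + 1 < pm) (hpm : ∀ x, pm ≤ p x) (hP : ∀ x, p x ≤ P) {A : ℝ} (hA : 0 < A) :
    ∃ C > (0 : ℝ), ∀ w J : Rn n → ℝ≥0∞, Measurable w → ∫⁻ x, w x ^ p x ≤ 1 →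
      ∫⁻ x, w x ^ ((n : ℝ) * b / γ) ≤ 1 →
      (∀ x, J x ≤ ENNReal.ofReal A * ∫⁻ y, rieszKer n γ (x - y) * w y ^ (b + 1)) →
      ∫⁻ x, (J x / ENNReal.ofReal C) ^ p x ≤ 1 ∧
        ∫⁻ x, (J x / ENNReal.ofReal C) ^ ((n : ℝ) * b / γ) ≤ 1 := by
  have hb0 : (0 : ℝ) < b := by exact_mod_cast hb
  have hn0 : (0 : ℝ) < n := by exact_mod_cast hn
  set β : ℝ := (b : ℝ) + 1 with hβ
  have hβ1 : 1 ≤ β := by linarith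
  have hβ0 : 0 < β := by linarith
  set r : ℝ := (n : ℝ) * b / γ with hr
  have hq : 1 < r / β := by
    rw [hr, div_div, one_lt_div (by positivity)]
    exact hnb
  have hr1 : 1 ≤ r := by
    rw [one_lt_div hβ0] at hq; linarith
  have hnq : (n : ℝ) / (r / β) = γ * β / b := by
    rw [hr]; field_simp
  have hγq : γ < n / (r / β) := by
    rw [hnq, lt_div_iff₀ hb0]
    exact mul_lt_mul_of_pos_left (by linarith) hγ
  have he : 1 - γ / (n / (r / β)) = 1 / β := by
    rw [hnq]; field_simp; rw [hβ]; ring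
  obtain ⟨K, hK0, hK, hHed⟩ := exists_lintegral_rieszKer_mul_le (n := n) hγ hq hγq
  obtain ⟨K₁, hK₁, h₁⟩ := exists_lintegral_maxFn_rpow_div_le hn hplog hβ1 hbpm hpm hP
  obtain ⟨K₂, hK₂, h₂⟩ := exists_lintegral_maxFn_rpow_le hn hq
  set L := ENNReal.ofReal A * K with hL
  have hA0 : ENNReal.ofReal A ≠ 0 := by simpa using hA
  have hL0 : L ≠ 0 := mul_ne_zero hA0 hK0
  have hLt : L ≠ ∞ := by finiteness
  set D := L * (1 + K₁ + K₂) with hD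
  have hD0 : D ≠ 0 := mul_ne_zero hL0 (by simp)
  have hDt : D ≠ ∞ := by finiteness
  refine ⟨D.toReal, ENNReal.toReal_pos hD0 hDt, fun w J hw hwp hwr hJ => ?_⟩
  rw [ENNReal.ofReal_toReal hDt]
  have hpow : ∀ (a : ℝ≥0∞) (s : ℝ), (a ^ (b + 1)) ^ (s / β) = a ^ s := by
    intro a s
    rw [← ENNReal.rpow_natCast, ← ENNReal.rpow_mul]
    congr 1
    rw [Nat.cast_add_one, ← hβ]
    field_simp
  have hF : Measurable fun y => w y ^ (b + 1) := hw.pow_const _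
  have hFr : ∫⁻ y, (w y ^ (b + 1)) ^ (r / β) ≤ 1 := by simpa only [hpow] using hwr
  have hFp : ∫⁻ y, (w y ^ (b + 1)) ^ (p y / β) ≤ 1 := by simpa only [hpow] using hwp
  have hJH : ∀ x, J x ≤ L * maxFn (fun y => w y ^ (b + 1)) x ^ (1 / β) := by
    intro x
    refine (hJ x).trans ?_
    rw [hL, mul_assoc, ← he]
    exact mul_le_mul_right (hHed _ hF hFr x) _
  have hexp : ∀ (a : ℝ≥0∞) (s : ℝ), (a ^ (1 / β)) ^ s = a ^ (s / β) := by
    intro a s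
    rw [← ENNReal.rpow_mul]
    congr 1; ring
  constructor
  · refine lintegral_div_rpow_le_one (fun x => by linarith [hpm x]) hL0 hLt hK₁ hJH ?_ ?_
    · simpa only [hexp] using h₁ _ hF hFp
    · exact mul_le_mul_right le_self_add _
  · refine lintegral_div_rpow_le_one (fun _ => hr1) hL0 hLt hK₂ hJH ?_ ?_
    · simp only [hexp]
      refine (h₂ _ hF).trans ?_
      exact (mul_le_mul_right hFr _).trans (mul_one _).le
    · refine mul_le_mul_right ?_ _
      rw [add_right_comm]
      exact le_self_add

end

/-- Control of the nonlinear term (γ = 1) in mixed variable Lebesgue spaces. -/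
theorem stmt8 (n b : ℕ) (hn : 1 ≤ n) (hb : 1 ≤ b) (α : ℝ) (hα : 1/2 < α ∧ α ≤ 1)
    (h2α : 2 * α - 1 < n) (hnb : (2 * α - 1) * ((b:ℝ) + 1) < (n:ℝ) * b)
    (p : Rn n → ℝ) (hplog : IsPLog univ p)
    (hpminus : ∃ pm : ℝ, (b:ℝ) + 1 < pm ∧ ∀ᵐ x ∂(volume : Measure (Rn n)), pm ≤ p x)
    (hpplus : ∃ P : ℝ, (∀ᵐ x ∂(volume : Measure (Rn n)), p x ≤ P) ∧
      (2 * α - 1) * P < (n:ℝ) * ((b:ℝ) + 1)) :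
    ∃ C > (0:ℝ), ∀ u : ℝ → Rn n → ℝ, Measurable (Function.uncurry u) →
      mixedN n p ((n:ℝ) * b / (2 * α - 1))
        (fun t x => ∑ j : Fin n, ∫ s in Ioc (0:ℝ) t,
          conv n (dKer n α (t - s) j) (fun y => |u s y| ^ b * u s y) x)
      ≤ ENNReal.ofReal C * (mixedN n p ((n:ℝ) * b / (2 * α - 1)) u) ^ (b + 1) := by
  obtain ⟨pm, hbpm, hpm⟩ := hpminus
  obtain ⟨P, hP, -⟩ := hpplus
  have hcont : Continuous p := by
    obtain ⟨-, hp1, C₁, -, -, -, -, hlog, -⟩ := hplog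
    exact continuous_of_logHolder (fun x => hp1 x (mem_univ x))
      fun x y hxy => hlog x (mem_univ x) y (mem_univ y) hxy
  replace hpm := forall_le_of_ae_le continuous_const hcont hpm
  replace hP := forall_le_of_ae_le hcont continuous_const hP
  have hγ : 0 < 2 * α - 1 := by linarith [hα.1]
  obtain ⟨A, hA, hker⟩ := exists_enorm_duhamel_le hn b (by linarith [hα.1]) hα.2 h2α
  obtain ⟨C, hC, hmod⟩ := exists_lintegral_riesz_pow_le hn hb hγ hnb hplog hbpm hpm hP hA
  refine ⟨C, hC, fun u hu => ?_⟩
  set r : ℝ := (n : ℝ) * b / (2 * α - 1) with hr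
  have hr0 : 0 ≤ r := by positivity
  have hp0 : ∀ x, 0 ≤ p x := fun x => by
    have := hpm x
    have : (0 : ℝ) ≤ b := b.cast_nonneg
    linarith
  set v : ℝ → Rn n → ℝ := fun t x => ∑ j : Fin n, ∫ s in Ioc (0:ℝ) t,
    conv n (dKer n α (t - s) j) (fun y => |u s y| ^ b * u s y) x with hv
  have hC0 : ENNReal.ofReal C ≠ 0 := by simpa using hC
  have hJ : ∀ x, timeSup n v x ≤ ENNReal.ofReal A *
      ∫⁻ y, rieszKer n (2 * α - 1) (x - y) * timeSup n u y ^ (b + 1) := by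
    intro x
    refine essSup_le_of_ae_le _ (Filter.Eventually.of_forall fun t => ?_)
    show ENNReal.ofReal |v t x| ≤ _
    rw [← Real.enorm_eq_ofReal_abs]
    exact hker u hu t x
  set N := mixedN n p r u with hN
  have key : ∀ l : ℝ≥0∞, N < l → l ≠ ∞ → mixedN n p r v ≤ ENNReal.ofReal C * l ^ (b + 1) := by
    intro l hl hlt
    have hl0 : l ≠ 0 := (zero_le.trans_lt hl).ne'
    have hlb0 : l ^ (b + 1) ≠ 0 := pow_ne_zero _ hl0
    have hlbt : l ^ (b + 1) ≠ ∞ := ENNReal.pow_ne_top hlt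
    obtain ⟨h1, h2⟩ := max_lt_iff.1 (show max _ _ < l from hl)
    have hdiv : ∀ x, timeSup n v x / (ENNReal.ofReal C * l ^ (b + 1)) =
        timeSup n v x / l ^ (b + 1) / ENNReal.ofReal C := by
      intro x
      rw [div_eq_mul_inv, div_eq_mul_inv, div_eq_mul_inv, mul_assoc, mul_comm (ENNReal.ofReal C),
        ENNReal.mul_inv (.inl hlb0) (.inl hlbt)]
    obtain ⟨m1, m2⟩ := hmod (fun x => timeSup n u x / l) (fun x => timeSup n v x / l ^ (b + 1))
      ((measurable_timeSup hu).div_const _)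
      (lintegral_div_rpow_le_one_of_luxNorm_lt hp0 h1)
      (lintegral_div_rpow_le_one_of_luxNorm_lt (fun _ => hr0) h2) (fun x => by
        have e : ∀ y, rieszKer n (2 * α - 1) (x - y) * (timeSup n u y / l) ^ (b + 1) =
            rieszKer n (2 * α - 1) (x - y) * timeSup n u y ^ (b + 1) * (l ^ (b + 1))⁻¹ := by
          intro y
          rw [div_eq_mul_inv, mul_pow, ENNReal.inv_pow, mul_assoc]
        simp only [e]
        rw [lintegral_mul_const' _ _ (ENNReal.inv_ne_top.2 hlb0), ← mul_assoc, div_eq_mul_inv]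
        exact mul_le_mul_left (hJ x) _)
    have hD0 : ENNReal.ofReal C * l ^ (b + 1) ≠ 0 := mul_ne_zero hC0 hlb0
    exact max_le (luxNorm_le hD0 (by simpa only [hdiv] using m1))
      (luxNorm_le hD0 (by simpa only [hdiv] using m2))
  rcases eq_or_ne N ∞ with hNt | hNt
  · rw [hNt, ENNReal.top_pow (by omega), ENNReal.mul_top hC0]
    exact le_top
  have hcts : Filter.Tendsto (fun l : ℝ≥0∞ => ENNReal.ofReal C * l ^ (b + 1)) (nhdsWithin N (Ioi N))
      (nhds (ENNReal.ofReal C * N ^ (b + 1))) :=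
    ((ENNReal.continuous_const_mul ENNReal.ofReal_ne_top).comp
      (ENNReal.continuous_pow (b + 1))).continuousWithinAt
  have hne : (nhdsWithin N (Ioi N)).NeBot := nhdsGT_neBot_of_exists_gt ⟨∞, lt_top_iff_ne_top.2 hNt⟩
  refine ge_of_tendsto hcts ?_
  filter_upwards [Ioo_mem_nhdsGT (lt_top_iff_ne_top.2 hNt)] with l hl
  exact key l hl.1 hl.2.ne
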